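/- Let k, D ≥ 1 and let (X,T) be a ℤ^k-system which has an aperiodic symbolic factor. If mdim(X) < D/2, then there exists a ℤ^k-equivariant topological embedding of X into the shift action of ℤ^k on ([0,1]^D)^{ℤ^k}. -/

import Mathlib

/-!
The embedding is the orbit map `x ↦ (f (T n x))ₙ` of a generic continuous `f : X → [0,1]^D`, found
by a Baire category argument.

Freeness of the symbolic factor `π` gives, through `exists_marker`, clopen marker sets that depend
on `π` only. A first marker set `A`, with return vectors longer than a constant `r`, is used to
transmit `π`: the maps `f` considered are *admissible*, that is, one coordinate `j0` of `f` equals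
an injective code of `π x`, with values in `[3/4, 1]`, when `x ∈ A`, and is at most `1/2` when
`x ∉ A`. For such `f` the orbit map determines `π`, at the cost of a fraction of about `r^{-k}` of
one coordinate (`Admissible.map_eq_of_orbit_eq`).

It remains to separate the points of each fibre of `π`. A second, much sparser marker set yields
equivariant Voronoi tilings of the orbits which are locally constant and depend on `π` only
(`exists_voronoi`). Given `ε`, the bound `mdim X < D/2` and a large `N` provide a map of dimension
`w` that observes orbit segments over cubes of side `N` up to `ε`, with
`2 w + (N / r + 1)^k < D (N - 1)^k` (`exists_lowDimMap_of_mdim_lt`). Cover a tile by cubes of the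
grid `N ℤ^k`. Shrinking towards the centre keeps the convex tile inside itself, even when boundary
cubes are replaced by full cubes of side `N - 1` (`voronoi_shrink`); hence the tile has at least
`(N - 1)^k` points per covering cube, so more than twice as many free coordinates of `f` as the
dimension of the product map over the tile (`exists_tile_map`). A small perturbation of `f` on the
tile then separates orbit segments up to `ε`, by general position (`exists_perturbation`, proved
by estimating the Hausdorff dimension of the set of bad linear perturbations). Two points of one
fibre of `π` have the same tiles, so the perturbed `f` separates them up to `ε`
(`exists_admissible_separating`). Openness and density of these conditions, and Baire's theorem,
finish the proof (`exists_admissible_injective`).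
-/

open Set Filter
open scoped NNReal ENNReal Topology

/-- A continuous action of `ℤ^k` on a topological space. -/
structure IsZkAction {k : ℕ} {X : Type*} [TopologicalSpace X]
    (T : (Fin k → ℤ) → X → X) : Prop where
  cont : ∀ n, Continuous (T n)
  map_zero : ∀ x, T 0 x = x
  map_add : ∀ m n x, T (m + n) x = T m (T n x)

/-- The marker property for a `ℤ^k`-action. -/
def MarkerProperty {k : ℕ} {X : Type*} [TopologicalSpace X]
    (T : (Fin k → ℤ) → X → X) : Prop :=
  ∀ F : Finset (Fin k → ℤ), ∃ U : Set X, IsOpen U ∧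
    (⋃ n : Fin k → ℤ, T n '' U) = Set.univ ∧
    ∀ n ∈ F, n ≠ 0 → U ∩ T n '' U = ∅

/-- `f` is an `ε`-embedding with respect to the (pseudo-)distance `ρ`:
every fiber of `f` has `ρ`-diameter `< ε`. -/
def IsEpsEmbedding {X Y : Type*} [TopologicalSpace X] [TopologicalSpace Y]
    (ρ : X → X → ℝ) (ε : ℝ) (f : X → Y) : Prop :=
  Continuous f ∧ ∀ x y, f x = f y → ρ x y < ε

/-- `widim_ε(X, ρ)`: the least `n` such that there is an `ε`-embedding of `X`
into a finite simplicial complex of dimension at most `n`. -/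
noncomputable def widim (X : Type*) [TopologicalSpace X] (ρ : X → X → ℝ) (ε : ℝ) : ℕ :=
  sInf {n : ℕ | ∃ (m : ℕ) (P : Geometry.SimplicialComplex ℝ (EuclideanSpace ℝ (Fin m))),
    P.faces.Finite ∧ (∀ s ∈ P.faces, s.card ≤ n + 1) ∧
    ∃ f : X → P.space, IsEpsEmbedding ρ ε f}

/-- The distance `ρ_{[N]}(x,y) = sup_{a ∈ {0,…,N-1}^k} ρ(T^a x, T^a y)`. -/
noncomputable def blockRho {k : ℕ} {X : Type*} (T : (Fin k → ℤ) → X → X)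
    (ρ : X → X → ℝ) (N : ℕ) (x y : X) : ℝ :=
  ⨆ a : Fin k → Fin N, ρ (T (fun i => (a i : ℤ)) x) (T (fun i => (a i : ℤ)) y)

/-- Mean dimension of a `ℤ^k`-system:
`mdim(X) = lim_{ε→0} lim_{N→∞} widim_ε(X, d_{[N]})/N^k`, where the limit in `N`
equals the infimum (subadditivity) and the limit in `ε` equals the supremum
(monotonicity). -/
noncomputable def mdim {k : ℕ} (X : Type*) [MetricSpace X]
    (T : (Fin k → ℤ) → X → X) : ℝ≥0∞ :=
  ⨆ (ε : ℝ) (_ : 0 < ε), ⨅ (N : ℕ) (_ : 1 ≤ N),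
    (widim X (blockRho T dist N) ε : ℝ≥0∞) / (N : ℝ≥0∞) ^ k

/-! ### General position -/

open scoped ContDiff in
/-- A map `p` that oscillates by less than `δ` on the fibres of `f` is, up to `δ`, a `C¹` function
of `f`: the admissible values at `q` form a convex set, they can be chosen locally constant in `q`
because `X` is compact, and a smooth partition of unity glues the local choices. -/
theorem exists_smooth_through {X : Type*} [TopologicalSpace X] [CompactSpace X]
    {β J : Type} [Fintype β] [Fintype J] (f : X → β → ℝ) (hf : Continuous f)
    (p : X → J → ℝ) (hp : Continuous p) (δ : ℝ)
    (hosc : ∀ x y, f x = f y → ∀ j, |p x j - p y j| < δ) :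
    ∃ ψ : (β → ℝ) → (J → ℝ), ContDiff ℝ 1 ψ ∧ ∀ x j, |ψ (f x) j - p x j| < δ := by
  classical
  let t : (β → ℝ) → Set (J → ℝ) := fun q => {v | ∀ x, f x = q → ∀ j, |v j - p x j| < δ}
  have ht : ∀ q, Convex ℝ (t q) := by
    intro q v hv w hw a b ha hb hab x hx j
    simp only [Pi.add_apply, Pi.smul_apply, smul_eq_mul]
    have e : a * v j + b * w j - p x j = a * (v j - p x j) + b * (w j - p x j) := by
      linear_combination (p x j) * hab
    rw [e, ← Real.dist_0_eq_abs, ← Metric.mem_ball']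
    rw [Metric.mem_ball_comm]
    exact convex_ball (0:ℝ) δ (by simpa [Real.dist_eq] using hv x hx j)
      (by simpa [Real.dist_eq] using hw x hx j) ha hb hab
  have hloc : ∀ q : β → ℝ, ∃ c : J → ℝ, ∀ᶠ y in 𝓝 q, c ∈ t y := by
    intro q
    obtain ⟨c, hc⟩ : ∃ c : J → ℝ, ∀ x, f x = q → ∀ j, |c j - p x j| < δ := by
      by_cases h : ∃ x0, f x0 = q
      · obtain ⟨x0, hx0⟩ := h
        exact ⟨p x0, fun x hx => hosc _ _ (hx0.trans hx.symm)⟩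
      · exact ⟨0, fun x hx => (h ⟨x, hx⟩).elim⟩
    refine ⟨c, ?_⟩
    let B : Set X := {x | ∀ j, |c j - p x j| < δ}ᶜ
    have hB : IsClosed B := by
      apply isClosed_compl_iff.2
      simp only [ofPred_forall]
      exact isOpen_iInter_of_finite fun j => isOpen_lt (by fun_prop) continuous_const
    have hBi : IsClosed (f '' B) := (hB.isCompact.image hf).isClosed
    have hq : q ∉ f '' B := by
      rintro ⟨x, hx, rfl⟩
      exact hx (hc x rfl)
    filter_upwards [hBi.isOpen_compl.mem_nhds hq] with y hy x hx
    by_contra h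
    exact hy ⟨x, h, hx⟩
  obtain ⟨g, hg⟩ := exists_contMDiffMap_forall_mem_convex_of_local_const
    (n := 1) (modelWithCornersSelf ℝ (β → ℝ)) ht hloc
  exact ⟨g, g.contMDiff.contDiff, fun x j => hg (f x) x rfl j⟩

/-- General position. If finitely many `C¹` images of `ℝ^α` are given and `2 |α| < |J|`, then a
small generic linear perturbation `ψ + L` is injective on their union. A bad `L` identifies two
points which differ in some coordinate `b`; it is determined in a `C¹` way by the two parameters
and by the entries of `L` outside column `b`, hence the bad set has Hausdorff dimension at most
`2 |α| + |J| (|β| - 1) < |J| |β|` and its complement is dense. -/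
theorem exists_generic_linear {α β J ι : Type} [Fintype α] [Fintype β] [Fintype J] [Finite ι]
    (hdim : 2 * Fintype.card α < Fintype.card J)
    (P : ι → (α → ℝ) → (β → ℝ)) (hP : ∀ i, ContDiff ℝ 1 (P i))
    (ψ : (β → ℝ) → (J → ℝ)) (hψ : ContDiff ℝ 1 ψ) (δ : ℝ) (hδ : 0 < δ) :
    ∃ L : J → β → ℝ, (∀ j b, |L j b| < δ) ∧
      ∀ i i' u u', (∀ j, ψ (P i u) j + ∑ b, L j b * P i u b =
        ψ (P i' u') j + ∑ b, L j b * P i' u' b) → P i u = P i' u' := by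
  classical
  rcases isEmpty_or_nonempty β with hβ | hβ
  · exact ⟨fun _ b => isEmptyElim b, fun _ b => isEmptyElim b, fun _ _ _ _ _ => Subsingleton.elim _ _⟩
  -- `Φ i i' b` recovers the matrix `L` from the parameters `u, u'` and the columns other than `b`,
  -- by solving the coincidence equations for the column `b`.
  let W : β → Type := fun b => ((α → ℝ) × (α → ℝ)) × (J → {b' : β // b' ≠ b} → ℝ)
  let Φ : (i i' : ι) → (b : β) → W b → (J → β → ℝ) := fun i i' b w j b' =>
    if h : b' = b then
      (ψ (P i' w.1.2) j - ψ (P i w.1.1) j -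
        ∑ c : {b' : β // b' ≠ b}, w.2 j c * (P i w.1.1 c - P i' w.1.2 c)) /
        (P i w.1.1 b - P i' w.1.2 b)
    else w.2 j ⟨b', h⟩
  let s : (i i' : ι) → (b : β) → Set (W b) := fun i i' b =>
    {w | P i w.1.1 b - P i' w.1.2 b ≠ 0}
  let bad : Set (J → β → ℝ) := ⋃ (i : ι) (i' : ι) (b : β), Φ i i' b '' s i i' b
  have hlt : dimH bad < Module.finrank ℝ (J → β → ℝ) := by
    have hJ : 0 < Fintype.card J := by omega
    have hfin : Module.finrank ℝ (J → β → ℝ) = Fintype.card J * Fintype.card β := by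
      simp [Module.finrank_pi_fintype]
    have key : ∀ i i' b, dimH (Φ i i' b '' s i i' b) ≤
        ((2 * Fintype.card α + Fintype.card J * (Fintype.card β - 1) : ℕ) : ℝ≥0∞) := by
      intro i i' b
      have hW : Module.finrank ℝ (((α → ℝ) × (α → ℝ)) × (J → {b' : β // b' ≠ b} → ℝ))
          = 2 * Fintype.card α + Fintype.card J * (Fintype.card β - 1) := by
        simp [Module.finrank_pi_fintype, two_mul]
      have hdiff : ∀ w ∈ s i i' b, ContDiffAt ℝ 1 (Φ i i' b) w := by
        intro w hw
        have hPi : ContDiff ℝ 1 (fun w : W b => P i w.1.1) := (hP i).comp (by fun_prop)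
        have hPi' : ContDiff ℝ 1 (fun w : W b => P i' w.1.2) := (hP i').comp (by fun_prop)
        have hψi : ContDiff ℝ 1 (fun w : W b => ψ (P i w.1.1)) := hψ.comp hPi
        have hψi' : ContDiff ℝ 1 (fun w : W b => ψ (P i' w.1.2)) := hψ.comp hPi'
        have hcoord : ∀ j c, ContDiff ℝ 1 (fun w : W b => w.2 j c) := by
          intro j c
          change ContDiff ℝ 1
            (fun w : ((α → ℝ) × (α → ℝ)) × (J → {b' : β // b' ≠ b} → ℝ) => w.2 j c)
          fun_prop
        have hPc := contDiff_pi.1 hPi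
        have hPc' := contDiff_pi.1 hPi'
        have hψc := contDiff_pi.1 hψi
        have hψc' := contDiff_pi.1 hψi'
        rw [contDiffAt_pi]
        intro j
        rw [contDiffAt_pi]
        intro b'
        by_cases h : b' = b
        · have e : (fun w : W b => Φ i i' b w j b') = fun w : W b =>
              (ψ (P i' w.1.2) j - ψ (P i w.1.1) j -
              ∑ c : {b' : β // b' ≠ b}, w.2 j c * (P i w.1.1 c - P i' w.1.2 c)) /
              (P i w.1.1 b - P i' w.1.2 b) := by
            funext w
            simp only [Φ, dif_pos h]
          rw [e]
          refine ContDiffAt.div (ContDiff.contDiffAt ?_) (ContDiff.contDiffAt ?_) hw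
          · refine ((hψc' j).sub (hψc j)).sub (ContDiff.sum fun c _ => ContDiff.mul ?_ ?_)
            · exact hcoord j c
            · exact (hPc c).sub (hPc' c)
          · exact (hPc b).sub (hPc' b)
        · have e : (fun w : W b => Φ i i' b w j b') = fun w : W b => w.2 j ⟨b', h⟩ := by
            funext w
            simp only [Φ, dif_neg h]
          rw [e]
          exact (hcoord j ⟨b', h⟩).contDiffAt
      have h1 : dimH (Φ i i' b '' s i i' b) ≤ dimH (s i i' b) := by
        apply dimH_image_le_of_locally_lipschitzOn
        intro w hw
        obtain ⟨K, t, ht, hK⟩ := (hdiff w hw).exists_lipschitzOnWith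
        exact ⟨K, t, mem_nhdsWithin_of_mem_nhds ht, hK⟩
      refine h1.trans ((dimH_mono (subset_univ _)).trans ?_)
      rw [Real.dimH_univ_eq_finrank, hW]
    have hβ1 : 0 < Fintype.card β := Fintype.card_pos
    have hle : dimH bad ≤
        ((2 * Fintype.card α + Fintype.card J * (Fintype.card β - 1) : ℕ) : ℝ≥0∞) := by
      simp only [bad, dimH_iUnion]
      exact iSup_le fun i => iSup_le fun i' => iSup_le fun b => key i i' b
    refine hle.trans_lt ?_
    rw [hfin, Nat.cast_lt]
    obtain ⟨m, hm⟩ : ∃ m, Fintype.card β = m + 1 := ⟨_, (Nat.succ_pred_eq_of_pos hβ1).symm⟩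
    rw [hm, Nat.add_sub_cancel, mul_add, mul_one]
    omega
  have hdense := dense_compl_of_dimH_lt_finrank hlt
  obtain ⟨L, hLδ, hLbad⟩ := hdense.inter_open_nonempty (Metric.ball 0 δ) Metric.isOpen_ball
    ⟨0, Metric.mem_ball_self hδ⟩
  · refine ⟨L, fun j b => ?_, fun i i' u u' h => ?_⟩
    · have h1 : ‖L‖ < δ := by simpa using hLδ
      exact ((norm_le_pi_norm (L j) b).trans (norm_le_pi_norm L j)).trans_lt h1
    · by_contra hne
      obtain ⟨b, hb⟩ := Function.ne_iff.1 hne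
      have hb' : P i u b - P i' u' b ≠ 0 := sub_ne_zero.2 hb
      apply hLbad
      simp only [bad, mem_iUnion]
      refine ⟨i, i', b, ((u, u'), fun j c => L j c), hb', ?_⟩
      funext j b'
      by_cases hbb : b' = b
      · subst hbb
        simp only [Φ, dif_pos]
        rw [div_eq_iff hb']
        have hj := h j
        rw [← Fintype.sum_subtype_add_sum_subtype (fun c => c ≠ b') (fun c => L j c * P i u c),
          ← Fintype.sum_subtype_add_sum_subtype (fun c => c ≠ b') (fun c => L j c * P i' u' c)] at hj
        have hs : ∀ v : β → ℝ, ∑ c : {c // ¬ c ≠ b'}, L j c * v c = L j b' * v b' := by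
          intro v
          have : Unique {c // ¬ c ≠ b'} := ⟨⟨⟨b', by simp⟩⟩, fun c => Subtype.ext (not_not.1 c.2)⟩
          rw [Fintype.sum_unique]
          have : ((default : {c // ¬ c ≠ b'}) : β) = b' := not_not.1 (default : {c // ¬ c ≠ b'}).2
          rw [this]
        rw [hs, hs] at hj
        simp only [mul_sub, Finset.sum_sub_distrib]
        linarith
      · simp only [Φ, dif_neg hbb]

/-- If `f` takes its values in a finite union of `C¹` images of `ℝ^α`, and `2 |α| < |J|`, then every
`p : X → ℝ^J` that oscillates little on the fibres of `f` can be perturbed to a map whose fibres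
refine those of `f`. -/
theorem exists_perturbation {X : Type*} [TopologicalSpace X] [CompactSpace X]
    {α β J ι : Type} [Fintype α] [Fintype β] [Fintype J] [Finite ι]
    (hdim : 2 * Fintype.card α < Fintype.card J)
    (P : ι → (α → ℝ) → (β → ℝ)) (hP : ∀ i, ContDiff ℝ 1 (P i))
    (f : X → β → ℝ) (hf : Continuous f) (hfP : ∀ x, ∃ i u, P i u = f x)
    (p : X → J → ℝ) (hp : Continuous p) (δ : ℝ) (hδ : 0 < δ)
    (hosc : ∀ x y, f x = f y → ∀ j, |p x j - p y j| < δ) :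
    ∃ F : X → J → ℝ, Continuous F ∧ (∀ x j, |F x j - p x j| < 2 * δ) ∧
      ∀ x y, F x = F y → f x = f y := by
  obtain ⟨ψ, hψ, hψp⟩ := exists_smooth_through f hf p hp δ hosc
  obtain ⟨B, hB⟩ : ∃ B : ℝ, ∀ x, ‖f x‖ ≤ B := by
    obtain ⟨B, hB⟩ := (isCompact_range hf).isBounded.exists_norm_le
    exact ⟨B, fun x => hB _ (mem_range_self x)⟩
  have hden : 0 < (Fintype.card β : ℝ) * (|B| + 1) + 1 := by positivity
  obtain ⟨L, hL, hinj⟩ := exists_generic_linear hdim P hP ψ hψ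
    (δ / ((Fintype.card β : ℝ) * (|B| + 1) + 1)) (by positivity)
  refine ⟨fun x j => ψ (f x) j + ∑ b, L j b * f x b, ?_, fun x j => ?_, fun x y h => ?_⟩
  · have := hψ.continuous
    fun_prop
  · have h1 : |∑ b, L j b * f x b| ≤ δ := by
      have h2 : ∀ b, |L j b * f x b| ≤
          δ / ((Fintype.card β : ℝ) * (|B| + 1) + 1) * (|B| + 1) := by
        intro b
        rw [abs_mul]
        refine mul_le_mul (hL j b).le ?_ (abs_nonneg _) (by positivity)
        have := norm_le_pi_norm (f x) b
        rw [Real.norm_eq_abs] at this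
        linarith [hB x, le_abs_self B]
      refine (Finset.abs_sum_le_sum_abs _ _).trans ((Finset.sum_le_sum fun b _ => h2 b).trans ?_)
      rw [Finset.sum_const, Finset.card_univ, nsmul_eq_mul, div_mul_eq_mul_div, mul_div_assoc',
        div_le_iff₀ hden]
      nlinarith
    have h3 := hψp x j
    calc |ψ (f x) j + ∑ b, L j b * f x b - p x j|
        = |(ψ (f x) j - p x j) + ∑ b, L j b * f x b| := by ring_nf
      _ ≤ _ := abs_add_le _ _
      _ < 2 * δ := by linarith
  · obtain ⟨i, u, hu⟩ := hfP x
    obtain ⟨i', u', hu'⟩ := hfP y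
    rw [← hu, ← hu']
    apply hinj
    intro j
    rw [hu, hu']
    exact congrFun h j

/-! ### Low-dimensional maps from widim -/

/-- The cube `{0,…,N-1}^k`. -/
noncomputable def zbox (k N : ℕ) : Finset (Fin k → ℤ) := Fintype.piFinset fun _ => Finset.Ico 0 (N : ℤ)

theorem mem_zbox {k N : ℕ} {a : Fin k → ℤ} : a ∈ zbox k N ↔ ∀ i, 0 ≤ a i ∧ a i < N := by
  simp [zbox]

theorem card_zbox (k N : ℕ) : (zbox k N).card = N ^ k := by
  simp [zbox]

/-- There is a continuous map from `X` into finitely many `C¹` images of `ℝ^n` in some Euclidean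
space, such that points with the same image stay `ε`-close along `Ω`. This replaces `ε`-embeddings
for the metric `d_Ω` into an `n`-dimensional complex; unlike simplicial complexes, such targets are
obviously stable under products. -/
def LowDimMap {k : ℕ} {X : Type*} [MetricSpace X] (T : (Fin k → ℤ) → X → X)
    (Ω : Finset (Fin k → ℤ)) (ε : ℝ) (n : ℕ) : Prop :=
  ∃ (α β ι : Type) (_ : Fintype α) (_ : Fintype β) (_ : Finite ι) (f : X → β → ℝ)
    (P : ι → (α → ℝ) → (β → ℝ)), Fintype.card α = n ∧ Continuous f ∧
    (∀ i, ContDiff ℝ 1 (P i)) ∧ (∀ x, ∃ i u, P i u = f x) ∧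
    ∀ x y, f x = f y → ∀ g ∈ Ω, dist (T g x) (T g y) < ε

/-- Observing the system through an `Ω`-map at each point of `C` gives an `Ω'`-map whenever
`Ω' ⊆ C + Ω`. -/
theorem LowDimMap.prod {k : ℕ} {X : Type*} [MetricSpace X] {T : (Fin k → ℤ) → X → X}
    (hT : IsZkAction T) {Ω : Finset (Fin k → ℤ)} {ε : ℝ} {n : ℕ} (h : LowDimMap T Ω ε n)
    (C Ω' : Finset (Fin k → ℤ)) (hΩ : ∀ g ∈ Ω', ∃ c ∈ C, g - c ∈ Ω) :
    LowDimMap T Ω' ε (C.card * n) := by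
  obtain ⟨α, β, ι, hα, hβ, hι, f, P, hcard, hf, hP, hfP, hfib⟩ := h
  let e := C.equivFin
  refine ⟨Fin C.card × α, Fin C.card × β, Fin C.card → ι, inferInstance, inferInstance,
    inferInstance, fun x q => f (T (e.symm q.1 : Fin k → ℤ) x) q.2,
    fun i u q => P (i q.1) (fun a => u (q.1, a)) q.2, ?_, ?_, ?_, ?_, ?_⟩
  · simp [hcard]
  · refine continuous_pi fun q => ?_
    exact (continuous_apply q.2).comp (hf.comp (hT.cont _))
  · intro i
    rw [contDiff_pi]
    intro q
    exact contDiff_pi.1 ((hP (i q.1)).comp (by fun_prop)) q.2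
  · intro x
    choose i u hiu using fun c : Fin C.card => hfP (T (e.symm c : Fin k → ℤ) x)
    refine ⟨i, fun q => u q.1 q.2, ?_⟩
    funext q
    exact congrFun (hiu q.1) q.2
  · intro x y hxy g hg
    obtain ⟨c, hc, hgc⟩ := hΩ g hg
    have h1 : f (T c x) = f (T c y) := by
      funext b
      have := congrFun hxy (e ⟨c, hc⟩, b)
      simpa using this
    have h2 := hfib _ _ h1 _ hgc
    rwa [← hT.map_add, ← hT.map_add, sub_add_cancel] at h2

/-- A simplex with at most `n + 1` vertices is contained in the image of an affine map from `ℝ^n`. -/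
theorem exists_affine_param {m n : ℕ} (s : Finset (EuclideanSpace ℝ (Fin m)))
    (hs : s.Nonempty) (hn : s.card ≤ n + 1) :
    ∃ P : (Fin n → ℝ) → (Fin m → ℝ), ContDiff ℝ 1 P ∧
      ∀ x ∈ convexHull ℝ (s : Set (EuclideanSpace ℝ (Fin m))), ∃ u, P u = x.ofLp := by
  classical
  obtain ⟨v0, hv0⟩ := hs
  have hc : (s.erase v0).card ≤ n := by
    rw [Finset.card_erase_of_mem hv0]; omega
  let e := (s.erase v0).equivFin
  let y : Fin n → EuclideanSpace ℝ (Fin m) := fun j =>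
    if h : (j : ℕ) < (s.erase v0).card then (e.symm ⟨j, h⟩ : EuclideanSpace ℝ (Fin m)) else v0
  let A : (Fin n → ℝ) → EuclideanSpace ℝ (Fin m) := fun u => v0 + ∑ j, u j • (y j - v0)
  have hconv : Convex ℝ (range A) := by
    rintro _ ⟨u, rfl⟩ _ ⟨w, rfl⟩ a b ha hb hab
    refine ⟨a • u + b • w, ?_⟩
    simp only [A, Pi.add_apply, Pi.smul_apply, smul_eq_mul, add_smul, mul_smul,
      Finset.sum_add_distrib, smul_add, Finset.smul_sum]
    have : v0 = a • v0 + b • v0 := by rw [← add_smul, hab, one_smul]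
    nth_rewrite 1 [this]
    abel
  have hsub : (s : Set (EuclideanSpace ℝ (Fin m))) ⊆ range A := by
    intro v hv
    by_cases h : v = v0
    · exact ⟨0, by simp [A, h]⟩
    · have hv' : v ∈ s.erase v0 := Finset.mem_erase.2 ⟨h, hv⟩
      let j : Fin n := ⟨e ⟨v, hv'⟩, (e ⟨v, hv'⟩).2.trans_le hc⟩
      have hj : y j = v := by simp [y, j]
      refine ⟨Pi.single j 1, ?_⟩
      simp only [A]
      rw [Finset.sum_eq_single j]
      · simp [hj]
      · intro b _ hb
        simp [hb]
      · simp
  refine ⟨fun u => (A u).ofLp, ?_, fun x hx => ?_⟩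
  · rw [contDiff_pi]
    intro i
    simp only [A, WithLp.ofLp_add, WithLp.ofLp_sum, WithLp.ofLp_smul, Pi.add_apply,
      Finset.sum_apply, Pi.smul_apply]
    fun_prop
  · obtain ⟨u, hu⟩ := convexHull_min hsub hconv hx
    exact ⟨u, congrArg WithLp.ofLp hu⟩

theorem dist_le_blockRho {k : ℕ} {X : Type*} [MetricSpace X] (T : (Fin k → ℤ) → X → X) (N : ℕ)
    (x y : X) {g : Fin k → ℤ} (hg : g ∈ zbox k N) :
    dist (T g x) (T g y) ≤ blockRho T dist N x y := by
  rw [mem_zbox] at hg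
  let a : Fin k → Fin N := fun i => ⟨(g i).toNat, by have := hg i; omega⟩
  have ha : (fun i => ((a i : ℕ) : ℤ)) = g := by
    funext i
    have := hg i
    simp only [a]
    omega
  have := le_ciSup (f := fun a : Fin k → Fin N =>
    dist (T (fun i => (a i : ℤ)) x) (T (fun i => (a i : ℤ)) y)) (Set.finite_range _).bddAbove a
  simp only [ha] at this
  exact this

theorem blockRho_lt {k : ℕ} {X : Type*} [MetricSpace X] (T : (Fin k → ℤ) → X → X) (N : ℕ)
    (x y : X) {ε : ℝ} (hε : 0 < ε) (h : ∀ g ∈ zbox k N, dist (T g x) (T g y) < ε) :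
    blockRho T dist N x y < ε := by
  rcases isEmpty_or_nonempty (Fin k → Fin N) with he | he
  · rw [blockRho, Real.iSup_of_isEmpty]; exact hε
  · obtain ⟨a, ha⟩ := exists_eq_ciSup_of_finite (f := fun a : Fin k → Fin N =>
      dist (T (fun i => (a i : ℤ)) x) (T (fun i => (a i : ℤ)) y))
    rw [blockRho, ← ha]
    exact h _ (mem_zbox.2 fun i => ⟨by positivity, by exact_mod_cast (a i).2⟩)

/-- The infimum defining `widim` is over a nonempty set: a partition of unity subordinate to a fine
cover is an `ε`-embedding into a full simplex. -/
theorem widim_set_nonempty {k : ℕ} {X : Type*} [MetricSpace X] [CompactSpace X]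
    {T : (Fin k → ℤ) → X → X} (hT : IsZkAction T) (N : ℕ) {ε : ℝ} (hε : 0 < ε) :
    {n : ℕ | ∃ (m : ℕ) (P : Geometry.SimplicialComplex ℝ (EuclideanSpace ℝ (Fin m))),
      P.faces.Finite ∧ (∀ s ∈ P.faces, s.card ≤ n + 1) ∧
      ∃ f : X → P.space, IsEpsEmbedding (blockRho T dist N) ε f}.Nonempty := by
  classical
  obtain ⟨t, -, ht⟩ := isCompact_univ.elim_nhds_subcover
    (fun x : X => ⋂ g ∈ zbox k N, {y | dist (T g y) (T g x) < ε / 2}) (fun x _ => by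
      rw [Filter.biInter_finset_mem]
      intro g _
      refine (isOpen_lt ((hT.cont g).dist continuous_const) continuous_const).mem_nhds ?_
      simpa using hε)
  let e := t.equivFin
  let m := t.card
  let c : Fin m → X := fun i => (e.symm i : X)
  let r : Fin m → X → ℝ := fun i y => ∏ g ∈ zbox k N, max 0 (ε / 2 - dist (T g y) (T g (c i)))
  have hr0 : ∀ i y, 0 ≤ r i y := fun i y => Finset.prod_nonneg fun g _ => le_max_left _ _
  have hrc : ∀ i, Continuous (r i) := fun i => continuous_finsetProd _ fun g _ =>
    continuous_const.max (continuous_const.sub ((hT.cont g).dist continuous_const))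
  have hrpos : ∀ y, ∃ i, 0 < r i y := by
    intro y
    have := ht (mem_univ y)
    simp only [mem_iUnion, mem_iInter] at this
    obtain ⟨x, hx, hy⟩ := this
    refine ⟨e ⟨x, hx⟩, Finset.prod_pos fun g hg => lt_max_of_lt_right ?_⟩
    have := hy g hg
    simp only [c, Equiv.symm_apply_apply]
    simp only [Set.mem_ofPred_eq] at this
    linarith
  have hrd : ∀ i y, 0 < r i y → ∀ g ∈ zbox k N, dist (T g y) (T g (c i)) < ε / 2 := by
    intro i y hi g hg
    by_contra h
    have : r i y = 0 := Finset.prod_eq_zero hg (max_eq_left (by linarith))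
    linarith
  let S : X → ℝ := fun y => ∑ i, r i y
  have hS : ∀ y, 0 < S y := fun y => by
    obtain ⟨i, hi⟩ := hrpos y
    exact Finset.sum_pos' (fun i _ => hr0 i y) ⟨i, Finset.mem_univ _, hi⟩
  have hSc : Continuous S := continuous_finsetSum _ fun i _ => hrc i
  let b : Fin m → EuclideanSpace ℝ (Fin m) := fun i => EuclideanSpace.single i 1
  have hb : AffineIndependent ℝ b := by
    have : LinearIndependent ℝ b := by
      have := (EuclideanSpace.basisFun (Fin m) ℝ).toBasis.linearIndependent
      convert! this using 1
      funext i
      simp [b]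
    exact this.affineIndependent
  let P : Geometry.SimplicialComplex ℝ (EuclideanSpace ℝ (Fin m)) :=
    Geometry.SimplicialComplex.ofAffineIndependent
      ⟨{s | s.Nonempty ∧ (s : Set (EuclideanSpace ℝ (Fin m))) ⊆ range b}, by
        intro s hs
        exact ⟨hs.1, fun u hu hne => ⟨hne, (Finset.coe_subset.2 hu).trans hs.2⟩⟩⟩
      (hb.range.mono (iUnion₂_subset fun s hs => hs.2))
  have hPf : ∀ s, s ∈ P.faces ↔ s.Nonempty ∧ (s : Set (EuclideanSpace ℝ (Fin m))) ⊆ range b :=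
    fun s => Iff.rfl
  have himg : ∀ s ∈ P.faces, s ⊆ Finset.univ.image b := by
    intro s hs v hv
    obtain ⟨i, hi⟩ := ((hPf s).1 hs).2 hv
    exact Finset.mem_image.2 ⟨i, Finset.mem_univ _, hi⟩
  have hsp : ∀ y, (∑ i, (r i y / S y) • b i) ∈ P.space := by
    intro y
    obtain ⟨i0, -⟩ := hrpos y
    have hface : Finset.univ.image b ∈ P.faces :=
      (hPf _).2 ⟨⟨b i0, Finset.mem_image_of_mem _ (Finset.mem_univ _)⟩, by simp⟩
    apply P.convexHull_subset_space hface
    refine (convex_convexHull ℝ _).sum_mem (fun i _ => div_nonneg (hr0 i y) (hS y).le) ?_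
      (fun i _ => subset_convexHull ℝ _ (by simp))
    rw [← Finset.sum_div]
    exact div_self (hS y).ne'
  refine ⟨m, m, P, ?_, ?_, fun y => ⟨_, hsp y⟩, ?_, ?_⟩
  · exact (Finset.finite_toSet (Finset.univ.image b).powerset).subset fun s hs =>
      Finset.mem_coe.2 (Finset.mem_powerset.2 (himg s hs))
  · intro s hs
    have h1 := Finset.card_le_card (himg s hs)
    have h2 : (Finset.univ.image b).card ≤ m := Finset.card_image_le.trans (by simp)
    omega
  · refine Continuous.subtype_mk (continuous_finsetSum _ fun i _ => ?_) _
    exact ((hrc i).div hSc fun y => (hS y).ne').smul continuous_const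
  · intro x y hxy
    have h1 : (∑ i, (r i x / S x) • b i) = ∑ i, (r i y / S y) • b i := congrArg Subtype.val hxy
    have h2 : ∀ i, r i x / S x = r i y / S y := by
      intro i
      have := congrArg (fun v : EuclideanSpace ℝ (Fin m) => v.ofLp i) h1
      simpa [b, Pi.single_apply] using this
    obtain ⟨i, hi⟩ := hrpos x
    have hi' : 0 < r i y := by
      have h3 : 0 < r i y / S y := by rw [← h2]; exact div_pos hi (hS x)
      exact (div_pos_iff_of_pos_right (hS y)).1 h3
    refine blockRho_lt T N x y hε fun g hg => ?_
    have h3 := hrd i x hi g hg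
    have h4 := hrd i y hi' g hg
    have := dist_triangle_right (T g x) (T g y) (T g (c i))
    linarith

theorem lowDimMap_widim {k : ℕ} {X : Type*} [MetricSpace X] [CompactSpace X]
    {T : (Fin k → ℤ) → X → X} (hT : IsZkAction T) (N : ℕ) {ε : ℝ} (hε : 0 < ε) :
    LowDimMap T (zbox k N) ε (widim X (blockRho T dist N) ε) := by
  classical
  obtain ⟨m, P, hfin, hcard, f, hf, hfib⟩ := Nat.sInf_mem (widim_set_nonempty (X := X) hT N hε)
  change ∀ s ∈ P.faces, s.card ≤ widim X (blockRho T dist N) ε + 1 at hcard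
  let n := widim X (blockRho T dist N) ε
  choose Q hQ using fun s : P.faces =>
    exists_affine_param (n := n) s.1 (P.nonempty_of_mem_faces s.2) (hcard s.1 s.2)
  have := hfin.to_subtype
  obtain ⟨q, ⟨en⟩⟩ := Finite.exists_equiv_fin P.faces
  refine ⟨Fin n, Fin m, Fin q, inferInstance, inferInstance, inferInstance,
    fun x => (f x : EuclideanSpace ℝ (Fin m)).ofLp, fun i => Q (en.symm i), by simp [n], ?_,
    fun i => (hQ _).1, ?_, ?_⟩
  · exact (PiLp.continuous_ofLp 2 _).comp (continuous_subtype_val.comp hf)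
  · intro x
    obtain ⟨s, hs, hxs⟩ := P.mem_space_iff.1 (f x).2
    obtain ⟨u, hu⟩ := (hQ ⟨s, hs⟩).2 _ hxs
    exact ⟨en ⟨s, hs⟩, u, by simpa using hu⟩
  · intro x y hxy g hg
    refine (dist_le_blockRho T N x y hg).trans_lt (hfib x y (Subtype.ext ?_))
    exact (WithLp.ofLp_injective 2) hxy

/-! ### Markers and Voronoi tilings -/

theorem IsZkAction.neg_cancel {k : ℕ} {X : Type*} [TopologicalSpace X]
    {T : (Fin k → ℤ) → X → X} (hT : IsZkAction T) (g : Fin k → ℤ) (x : X) :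
    T (-g) (T g x) = x := by
  rw [← hT.map_add, neg_add_cancel, hT.map_zero]

theorem eventually_mem_iff_of_isClopen {X : Type*} [TopologicalSpace X] {U : Set X}
    (hU : IsClopen U) (x : X) : ∀ᶠ y in 𝓝 x, (y ∈ U ↔ x ∈ U) := by
  by_cases h : x ∈ U
  · filter_upwards [hU.isOpen.mem_nhds h] with y hy
    exact ⟨fun _ => h, fun _ => hy⟩
  · filter_upwards [hU.compl.isOpen.mem_nhds h] with y hy
    exact ⟨fun h' => (hy h').elim, fun h' => (h h').elim⟩

/-- By compactness, freeness of the symbolic factor is seen on a finite window, uniformly in the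
point and in the (finitely many) group elements. -/
theorem exists_window {k l : ℕ} {X : Type*} [TopologicalSpace X] [CompactSpace X]
    {T : (Fin k → ℤ) → X → X} (hT : IsZkAction T)
    {π : X → ((Fin k → ℤ) → Fin l)} (hπ : Continuous π)
    (hfree : ∀ x g, g ≠ 0 → π (T g x) ≠ π x) (B : Finset (Fin k → ℤ)) :
    ∃ W : Finset (Fin k → ℤ), ∀ x, ∀ g ∈ B, g ≠ 0 → ∃ n ∈ W, π (T g x) n ≠ π x n := by
  classical
  have h1 : ∀ g : Fin k → ℤ, ∃ W : Finset (Fin k → ℤ), g ≠ 0 →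
      ∀ x, ∃ n ∈ W, π (T g x) n ≠ π x n := by
    intro g
    by_cases hg : g = 0
    · exact ⟨∅, fun h => (h hg).elim⟩
    obtain ⟨W, hW⟩ := isCompact_univ.elim_finite_subcover
      (fun n : Fin k → ℤ => {x : X | π (T g x) n ≠ π x n}) (fun n => by
        have h1 : Continuous fun x => π (T g x) n :=
          (continuous_apply n).comp (hπ.comp (hT.cont g))
        have h2 : Continuous fun x => π x n := (continuous_apply n).comp hπ
        exact isOpen_ne_fun h1 h2) (fun x _ => by
        obtain ⟨n, hn⟩ := Function.ne_iff.1 (hfree x g hg)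
        exact mem_iUnion.2 ⟨n, hn⟩)
    refine ⟨W, fun _ x => ?_⟩
    obtain ⟨n, hn, hx⟩ := mem_iUnion₂.1 (hW (mem_univ x))
    exact ⟨n, hn, hx⟩
  choose W hW using h1
  refine ⟨B.biUnion W, fun x g hg hg0 => ?_⟩
  obtain ⟨n, hn, h⟩ := hW g hg0 x
  exact ⟨n, Finset.mem_biUnion.2 ⟨g, hg, hn⟩, h⟩

/-- Clopen markers. The cylinder sets of a window from `exists_window` are processed one after the
other; from each cylinder, the points not yet within distance `M` of the marker set are added to
it. The result is a clopen set, saturated for `π`, whose return vectors exceed `M` in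
sup norm, and which every orbit meets within distance `M`. -/
theorem exists_marker {k l : ℕ} {X : Type*} [TopologicalSpace X] [CompactSpace X]
    {T : (Fin k → ℤ) → X → X} (hT : IsZkAction T)
    {π : X → ((Fin k → ℤ) → Fin l)} (hπ : Continuous π)
    (hequiv : ∀ g x, π (T g x) = fun n => π x (n + g))
    (hfree : ∀ x g, g ≠ 0 → π (T g x) ≠ π x) (M : ℕ) :
    ∃ U : Set X, IsClopen U ∧ (∀ x y, π x = π y → (x ∈ U ↔ y ∈ U)) ∧
      (∀ x ∈ U, ∀ g : Fin k → ℤ, g ≠ 0 → (∀ i, |g i| ≤ M) → T g x ∉ U) ∧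
      ∀ x, ∃ g : Fin k → ℤ, (∀ i, |g i| ≤ M) ∧ T g x ∈ U := by
  classical
  let B : Finset (Fin k → ℤ) := Fintype.piFinset fun _ => Finset.Icc (-(M : ℤ)) M
  have hB : ∀ g : Fin k → ℤ, g ∈ B ↔ ∀ i, |g i| ≤ M := by
    intro g
    simp [B, abs_le]
  obtain ⟨W, hW⟩ := exists_window hT hπ hfree B
  let V : (W → Fin l) → Set X := fun p => {x | ∀ n : W, π x n = p n}
  have hVc : ∀ p, IsClopen (V p) := by
    intro p
    have : V p = ⋂ n : W, (fun x => π x n) ⁻¹' {p n} := by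
      ext x; simp [V]
    rw [this]
    exact isClopen_iInter_of_finite fun n =>
      (isClopen_discrete _).preimage ((continuous_apply _).comp hπ)
  have key : ∀ s : Finset (W → Fin l), ∃ U : Set X, IsClopen U ∧
      (∀ x y, π x = π y → (x ∈ U ↔ y ∈ U)) ∧
      (∀ x ∈ U, ∀ g ∈ B, g ≠ 0 → T g x ∉ U) ∧
      ∀ p ∈ s, ∀ x ∈ V p, ∃ g ∈ B, T g x ∈ U := by
    intro s
    induction s using Finset.induction_on with
    | empty => exact ⟨∅, isClopen_empty, by simp, by simp, by simp⟩
    | insert p s _ ih =>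
      obtain ⟨U, hUc, hUs, hUsep, hUcov⟩ := ih
      let O : Set X := ⋃ g ∈ B, T g ⁻¹' U
      have hO : IsClopen O := isClopen_biUnion_finset fun g _ => hUc.preimage (hT.cont g)
      have hOm : ∀ x, x ∈ O ↔ ∃ g ∈ B, T g x ∈ U := by
        intro x; simp [O]
      refine ⟨U ∪ (V p \ O), hUc.union ((hVc p).diff hO), ?_, ?_, ?_⟩
      · intro x y hxy
        have h1 : x ∈ V p ↔ y ∈ V p := by simp [V, hxy]
        have h2 : x ∈ O ↔ y ∈ O := by
          rw [hOm, hOm]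
          refine exists_congr fun g => and_congr_right fun _ => hUs _ _ ?_
          rw [hequiv, hequiv, hxy]
        simp only [mem_union, Set.mem_sdiff, hUs x y hxy, h1, h2]
      · rintro x (hx | ⟨hxV, hxO⟩) g hg hg0 (hgx | ⟨hgV, hgO⟩)
        · exact hUsep x hx g hg hg0 hgx
        · apply hgO
          rw [hOm]
          refine ⟨-g, ?_, by rwa [hT.neg_cancel]⟩
          rw [hB] at hg ⊢
          intro i
          simpa using hg i
        · exact hxO ((hOm x).2 ⟨g, hg, hgx⟩)
        · obtain ⟨n, hn, hne⟩ := hW x g hg hg0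
          exact hne ((hgV ⟨n, hn⟩).trans (hxV ⟨n, hn⟩).symm)
      · intro q hq x hx
        rcases Finset.mem_insert.1 hq with rfl | hq
        · by_cases hxO : x ∈ O
          · obtain ⟨g, hg, h⟩ := (hOm x).1 hxO
            exact ⟨g, hg, Or.inl h⟩
          · refine ⟨0, ?_, ?_⟩
            · rw [hB]; simp
            · rw [hT.map_zero]
              exact Or.inr ⟨hx, hxO⟩
        · obtain ⟨g, hg, h⟩ := hUcov q hq x hx
          exact ⟨g, hg, Or.inl h⟩
  obtain ⟨U, hUc, hUs, hUsep, hUcov⟩ := key Finset.univ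
  refine ⟨U, hUc, hUs, fun x hx g hg0 hg => hUsep x hx g ((hB g).2 hg) hg0, fun x => ?_⟩
  obtain ⟨g, hg, h⟩ := hUcov (fun n => π x n) (Finset.mem_univ _) x (fun n => rfl)
  exact ⟨g, (hB g).1 hg, h⟩

/-- If `n` lies in the closed Voronoi half-space of `0` against `e`, and `n` belongs to the cube
`N u + [0,N)^k`, then the cube `(N - 1) u + [0,N-1)^k`, which is roughly the former
one shrunk by the factor `(N - 1)/N`, lies in the open half-space, provided `e` is long. -/
theorem voronoi_shrink {k : ℕ} (N : ℕ) (hN : 1 ≤ N) (n u a e : Fin k → ℤ)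
    (hn : ∀ i, 0 ≤ n i - N * u i ∧ n i - N * u i < N)
    (ha : ∀ i, 0 ≤ a i ∧ a i < N - 1)
    (he : ∃ i, ((2 * k * N ^ 2 : ℕ) : ℤ) < |e i|)
    (hne : ∑ i, n i ^ 2 ≤ ∑ i, (e i - n i) ^ 2) :
    ∑ i, ((N - 1) * u i + a i) ^ 2 < ∑ i, (e i - ((N - 1) * u i + a i)) ^ 2 := by
  obtain ⟨i1, hi1⟩ := he
  obtain ⟨i0, -, hmax⟩ := Finset.exists_max_image Finset.univ (fun i => |e i|)
    ⟨i1, Finset.mem_univ _⟩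
  have hm : ((2 * k * N ^ 2 : ℕ) : ℤ) < |e i0| := hi1.trans_le (hmax i1 (Finset.mem_univ _))
  push_cast at hm
  set m := |e i0| with hmdef
  have hm0 : 0 ≤ m := abs_nonneg _
  have h1 : 2 * ∑ i, n i * e i ≤ ∑ i, e i ^ 2 := by
    have : ∑ i, (e i - n i) ^ 2 = ∑ i, e i ^ 2 - 2 * ∑ i, n i * e i + ∑ i, n i ^ 2 := by
      rw [Finset.mul_sum, ← Finset.sum_sub_distrib, ← Finset.sum_add_distrib]
      exact Finset.sum_congr rfl fun i _ => by ring
    linarith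
  have h2 : 2 * ∑ i, ((N - 1) * u i + a i) * e i < ∑ i, e i ^ 2 := by
    have hE : m ^ 2 ≤ ∑ i, e i ^ 2 := by
      rw [hmdef, sq_abs]
      exact Finset.single_le_sum (f := fun i => e i ^ 2) (fun i _ => sq_nonneg _)
        (Finset.mem_univ i0)
    have hv : ∀ i, (N * ((N - 1) * u i + a i) - (N - 1) * n i) * e i ≤ N ^ 2 * m := by
      intro i
      have hb : |(N : ℤ) * ((N - 1) * u i + a i) - (N - 1) * n i| ≤ N ^ 2 := by
        have e1 : (N : ℤ) * ((N - 1) * u i + a i) - (N - 1) * n i =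
            N * a i - (N - 1) * (n i - N * u i) := by ring
        rw [e1, abs_le]
        obtain ⟨h3, h4⟩ := hn i
        obtain ⟨h5, h6⟩ := ha i
        generalize n i - N * u i = b at h3 h4
        have hN' : (1 : ℤ) ≤ N := by exact_mod_cast hN
        constructor <;> nlinarith
      calc _ ≤ |((N : ℤ) * ((N - 1) * u i + a i) - (N - 1) * n i) * e i| := le_abs_self _
        _ = |(N : ℤ) * ((N - 1) * u i + a i) - (N - 1) * n i| * |e i| := abs_mul _ _
        _ ≤ _ := mul_le_mul hb (hmax i (Finset.mem_univ _)) (abs_nonneg _) (by positivity)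
    have hsum := Finset.sum_le_sum fun i (_ : i ∈ Finset.univ) => hv i
    have e2 : ∑ i, (N * ((N - 1) * u i + a i) - (N - 1) * n i) * e i =
        N * ∑ i, ((N - 1) * u i + a i) * e i - (N - 1) * ∑ i, n i * e i := by
      rw [Finset.mul_sum, Finset.mul_sum, ← Finset.sum_sub_distrib]
      exact Finset.sum_congr rfl fun i _ => by ring
    rw [e2, Finset.sum_const, Finset.card_univ, Fintype.card_fin, nsmul_eq_mul] at hsum
    have hN' : (0 : ℤ) < N := by exact_mod_cast hN
    have hN1 : (0 : ℤ) ≤ N - 1 := by linarith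
    have h5 : (N - 1 : ℤ) * (2 * ∑ i, n i * e i) ≤ (N - 1) * ∑ i, e i ^ 2 :=
      mul_le_mul_of_nonneg_left h1 hN1
    have hmpos : 0 < m := lt_of_le_of_lt (by positivity) hm
    have h6 : 2 * (k * (N ^ 2 * m)) < m ^ 2 := by nlinarith
    refine lt_of_mul_lt_mul_left ?_ hN'.le
    linarith
  have e3 : ∑ i, (e i - ((N - 1) * u i + a i)) ^ 2 = ∑ i, e i ^ 2 -
      2 * ∑ i, ((N - 1) * u i + a i) * e i + ∑ i, ((N - 1) * u i + a i) ^ 2 := by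
    rw [Finset.mul_sum, ← Finset.sum_sub_distrib, ← Finset.sum_add_distrib]
    exact Finset.sum_congr rfl fun i _ => by ring
  rw [e3]
  linarith

/-- An equivariant Voronoi tiling of the orbits by markers: `off z` is the vector from `z` to the
centre of its tile, so the tile of a centre `x` is `{n | off (T n x) = -n}`. It is locally constant
and depends on `π` only. The last clause is what is used of convexity of Voronoi cells: whenever a
cube of the grid `N ℤ^k` meets a tile centred at the origin, the corresponding cube of the grid
`(N - 1) ℤ^k` is contained in the tile. -/
theorem exists_voronoi {k l : ℕ} {X : Type*} [TopologicalSpace X] [CompactSpace X]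
    {T : (Fin k → ℤ) → X → X} (hT : IsZkAction T)
    {π : X → ((Fin k → ℤ) → Fin l)} (hπ : Continuous π)
    (hequiv : ∀ g x, π (T g x) = fun n => π x (n + g))
    (hfree : ∀ x g, g ≠ 0 → π (T g x) ≠ π x) (N : ℕ) (hN : 1 ≤ N) :
    ∃ off : X → (Fin k → ℤ), IsLocallyConstant off ∧ (∀ x y, π x = π y → off x = off y) ∧
      (∀ z, off (T (off z) z) = 0) ∧
      ∀ x, off x = 0 → ∀ n u a : Fin k → ℤ, off (T n x) = -n →
        (∀ i, 0 ≤ n i - N * u i ∧ n i - N * u i < N) → (∀ i, 0 ≤ a i ∧ a i < N - 1) →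
        off (T (fun i => (N - 1) * u i + a i) x) = -(fun i => (N - 1) * u i + a i) := by
  classical
  -- The marker separation required by `voronoi_shrink`.
  set M : ℕ := 2 * k * N ^ 2 with hM
  obtain ⟨U, hUc, hUs, hUsep, hUcov⟩ := exists_marker hT hπ hequiv hfree M
  let nsq : (Fin k → ℤ) → ℤ := fun c => ∑ i, c i ^ 2
  -- Some marker has `nsq ≤ k M ^ 2`, and `|c i| ≤ nsq c`, so a nearest marker lies in the box `Bl`.
  let R : ℤ := k * M ^ 2
  let Bl : Finset (Fin k → ℤ) := Fintype.piFinset fun _ => Finset.Icc (-R) R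
  have hBl : ∀ g : Fin k → ℤ, g ∈ Bl ↔ ∀ i, |g i| ≤ R := by
    intro g
    simp [Bl, abs_le]
  let pat : X → Finset (Fin k → ℤ) := fun z => Bl.filter fun c => T c z ∈ U
  let pick : Finset (Fin k → ℤ) → (Fin k → ℤ) := fun p =>
    if h : ∃ c ∈ p, ∀ c' ∈ p, nsq c ≤ nsq c' then h.choose else 0
  have hpick : ∀ p : Finset (Fin k → ℤ), p.Nonempty →
      pick p ∈ p ∧ ∀ c' ∈ p, nsq (pick p) ≤ nsq c' := by
    intro p hp
    have h := Finset.exists_min_image p nsq hp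
    simp only [pick, dif_pos h]
    exact h.choose_spec
  have hcov : ∀ z, ∃ c ∈ pat z, nsq c ≤ R := by
    intro z
    obtain ⟨g, hg, hgU⟩ := hUcov z
    have hsq : ∀ i, g i ^ 2 ≤ (M : ℤ) ^ 2 := fun i => by
      rw [← sq_abs]
      exact pow_le_pow_left₀ (abs_nonneg _) (hg i) 2
    have hnsq : nsq g ≤ R := by
      refine (Finset.sum_le_sum fun i _ => hsq i).trans ?_
      simp [R]
    refine ⟨g, Finset.mem_filter.2 ⟨(hBl g).2 fun i => ?_, hgU⟩, hnsq⟩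
    have h1 : g i ^ 2 ≤ nsq g := Finset.single_le_sum (f := fun i => g i ^ 2)
      (fun i _ => sq_nonneg _) (Finset.mem_univ i)
    have h2 : |g i| ≤ g i ^ 2 := by
      rw [← sq_abs]
      exact Int.le_self_sq _
    linarith
  let off : X → (Fin k → ℤ) := fun z => pick (pat z)
  have hoffU : ∀ z, T (off z) z ∈ U := by
    intro z
    obtain ⟨c, hc, -⟩ := hcov z
    exact (Finset.mem_filter.1 (hpick (pat z) ⟨c, hc⟩).1).2
  have hoffmin : ∀ z c, T c z ∈ U → nsq (off z) ≤ nsq c := by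
    intro z c hc
    obtain ⟨c0, hc0, hc0R⟩ := hcov z
    have hmin := (hpick (pat z) ⟨c0, hc0⟩).2
    by_cases h : c ∈ Bl
    · exact hmin c (Finset.mem_filter.2 ⟨h, hc⟩)
    · rw [hBl] at h
      push Not at h
      obtain ⟨i, hi⟩ := h
      have h1 : c i ^ 2 ≤ nsq c := Finset.single_le_sum (f := fun i => c i ^ 2)
        (fun i _ => sq_nonneg _) (Finset.mem_univ i)
      have h2 : |c i| ≤ c i ^ 2 := by
        rw [← sq_abs]
        exact Int.le_self_sq _
      have h3 := hmin c0 hc0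
      exact h3.trans (by linarith)
  have hU0 : ∀ x ∈ U, off x = 0 := by
    intro x hx
    have h1 := hoffmin x 0 (by rwa [hT.map_zero])
    have h2 : nsq 0 = 0 := by simp [nsq]
    have h3 : nsq (off x) = 0 := le_antisymm (h2 ▸ h1) (Finset.sum_nonneg fun i _ => sq_nonneg _)
    funext i
    have := (Finset.sum_eq_zero_iff_of_nonneg fun i _ => sq_nonneg _).1 h3 i (Finset.mem_univ i)
    simpa using this
  refine ⟨off, ?_, ?_, fun z => hU0 _ (hoffU z), ?_⟩
  · have hpat : IsLocallyConstant pat := by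
      rw [IsLocallyConstant.iff_eventually_eq]
      intro x
      have : ∀ᶠ y in 𝓝 x, ∀ c ∈ Bl, (T c y ∈ U ↔ T c x ∈ U) := by
        rw [Filter.eventually_all_finset]
        intro c _
        exact eventually_mem_iff_of_isClopen (hUc.preimage (hT.cont c)) x
      filter_upwards [this] with y hy
      exact Finset.filter_congr hy
    exact hpat.comp pick
  · intro x y hxy
    have : pat x = pat y := by
      refine Finset.filter_congr fun c _ => hUs _ _ ?_
      rw [hequiv, hequiv, hxy]
    exact congrArg pick this
  · intro x hx n u a hn hnu ha
    have hxU : x ∈ U := by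
      have := hoffU x
      rwa [hx, hT.map_zero] at this
    set n' : Fin k → ℤ := fun i => (N - 1) * u i + a i with hn'
    have hnmin : ∀ e, T e x ∈ U → nsq n ≤ nsq (e - n) := by
      intro e he
      have := hoffmin (T n x) (e - n) (by rwa [← hT.map_add, sub_add_cancel])
      rw [hn] at this
      simpa [nsq] using this
    have hneg : nsq (-n') = nsq n' := by simp [nsq]
    have hle := hoffmin (T n' x) (-n') (by rwa [hT.neg_cancel])
    rw [hneg] at hle
    by_contra hne
    have hcU := hoffU (T n' x)
    rw [← hT.map_add] at hcU
    set e := off (T n' x) + n' with he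
    have he0 : e ≠ 0 := by
      intro h0
      exact hne (eq_neg_of_add_eq_zero_left h0)
    have hbig : ∃ i, ((2 * k * N ^ 2 : ℕ) : ℤ) < |e i| := by
      by_contra hcon
      push Not at hcon
      exact hUsep x hxU e he0 hcon hcU
    have := voronoi_shrink N hN n u a e hnu ha hbig (hnmin e hcU)
    have h2 : nsq n' < nsq (off (T n' x)) := by
      have e1 : off (T n' x) = e - n' := by rw [he]; simp
      rw [e1]
      exact this
    linarith

/-! ### Counting coordinates in a tile -/

/-- The indices `u` of the cubes `N u + [0,N)^k` that meet `S`. -/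
noncomputable def cubeIndex {k : ℕ} (N : ℕ) (S : Finset (Fin k → ℤ)) : Finset (Fin k → ℤ) :=
  S.image fun n i => n i / (N : ℤ)

/-- A tile stable under the cube shrinking of `exists_voronoi` contains `(N - 1)^k` points for each
cube that it meets. -/
theorem card_cubeIndex_mul_le {k : ℕ} (N : ℕ) (hN : 1 ≤ N) (S : Finset (Fin k → ℤ))
    (hS : ∀ n ∈ S, ∀ u a : Fin k → ℤ, (∀ i, 0 ≤ n i - N * u i ∧ n i - N * u i < N) →
      (∀ i, 0 ≤ a i ∧ a i < N - 1) → (fun i => (N - 1) * u i + a i) ∈ S) :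
    (cubeIndex N S).card * (N - 1) ^ k ≤ S.card := by
  classical
  rw [← card_zbox, ← Finset.card_product]
  have hcast : ((N - 1 : ℕ) : ℤ) = N - 1 := by omega
  have hN0 : (0 : ℤ) < N := by exact_mod_cast hN
  refine Finset.card_le_card_of_injOn (fun q i => (N - 1) * q.1 i + q.2 i) ?_ ?_
  · rintro ⟨u, a⟩ h
    obtain ⟨hu, ha⟩ := Finset.mem_product.1 h
    obtain ⟨n, hn, rfl⟩ := Finset.mem_image.1 hu
    rw [mem_zbox] at ha
    simp only [hcast] at ha
    refine hS n hn _ a (fun i => ?_) ha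
    have h1 := Int.emod_nonneg (n i) hN0.ne'
    have h2 := Int.emod_lt_of_pos (n i) hN0
    have h3 := Int.emod_add_mul_ediv (n i) N
    constructor <;> linarith
  · rintro ⟨u, a⟩ h ⟨u', a'⟩ h' heq
    have ha := mem_zbox.1 (Finset.mem_product.1 h).2
    have ha' := mem_zbox.1 (Finset.mem_product.1 h').2
    simp only [hcast] at ha ha'
    have key : ∀ i, u i = u' i := by
      intro i
      have hp : (0 : ℤ) < N - 1 := by linarith [ha i]
      have e : (N - 1 : ℤ) * u i + a i = (N - 1) * u' i + a' i := congrFun heq i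
      have h1 : (a i + (N - 1 : ℤ) * u i) / (N - 1) = u i := by
        rw [Int.add_mul_ediv_left _ _ hp.ne', Int.ediv_eq_zero_of_lt (ha i).1 (ha i).2, zero_add]
      have h2 : (a' i + (N - 1 : ℤ) * u' i) / (N - 1) = u' i := by
        rw [Int.add_mul_ediv_left _ _ hp.ne', Int.ediv_eq_zero_of_lt (ha' i).1 (ha' i).2, zero_add]
      rw [← h1, ← h2, add_comm (a i), e, add_comm (a' i)]
    have hu : u = u' := funext key
    subst hu
    refine Prod.ext rfl (funext fun i => ?_)
    have e : (N - 1 : ℤ) * u i + a i = (N - 1) * u i + a' i := congrFun heq i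
    linarith

/-- An `r`-separated set has at most `(N / r + 1)^k` points in a cube of side `N`, as each subcube
of side `r` holds at most one. -/
theorem card_marker_le {k : ℕ} {X : Type*} [TopologicalSpace X]
    {T : (Fin k → ℤ) → X → X} (hT : IsZkAction T) {A : Set X} {r : ℕ} (hr : 1 ≤ r)
    (hA : ∀ x ∈ A, ∀ g : Fin k → ℤ, g ≠ 0 → (∀ i, |g i| < r) → T g x ∉ A)
    (N : ℕ) (hN : 1 ≤ N) (S E : Finset (Fin k → ℤ)) (hES : E ⊆ S) (x : X)
    (hE : ∀ n ∈ E, T n x ∈ A) :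
    E.card ≤ (cubeIndex N S).card * (N / r + 1) ^ k := by
  classical
  rw [← card_zbox, ← Finset.card_product]
  have hN0 : (0 : ℤ) < N := by exact_mod_cast hN
  have hr0 : (0 : ℤ) < r := by exact_mod_cast hr
  refine Finset.card_le_card_of_injOn
    (fun n => (fun i => n i / (N : ℤ), fun i => (n i % (N : ℤ)) / r)) ?_ ?_
  · intro n hn
    refine Finset.mem_product.2 ⟨Finset.mem_image.2 ⟨n, hES hn, rfl⟩, mem_zbox.2 fun i => ?_⟩
    have h1 := Int.emod_nonneg (n i) hN0.ne'
    have h2 := Int.emod_lt_of_pos (n i) hN0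
    refine ⟨Int.ediv_nonneg h1 hr0.le, ?_⟩
    have : n i % (N : ℤ) / r ≤ (N : ℤ) / r := Int.ediv_le_ediv hr0 h2.le
    push_cast
    linarith
  · intro n hn n' hn' heq
    simp only [Prod.mk.injEq] at heq
    obtain ⟨h1, h2⟩ := heq
    by_contra hne
    have hg : n' - n ≠ 0 := sub_ne_zero.2 (Ne.symm hne)
    refine hA (T n x) (hE n hn) (n' - n) hg (fun i => ?_) ?_
    · have e1 := congrFun h1 i
      have e2 := congrFun h2 i
      have h3 := Int.emod_add_mul_ediv (n i) N
      have h3' := Int.emod_add_mul_ediv (n' i) N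
      have h4 := Int.emod_add_mul_ediv (n i % N) r
      have h4' := Int.emod_add_mul_ediv (n' i % N) r
      have h5 := Int.emod_nonneg (n i % N) hr0.ne'
      have h5' := Int.emod_nonneg (n' i % N) hr0.ne'
      have h6 := Int.emod_lt_of_pos (n i % N) hr0
      have h6' := Int.emod_lt_of_pos (n' i % N) hr0
      rw [e1] at h3
      rw [e2] at h4
      rw [Pi.sub_apply, abs_lt]
      constructor <;> linarith
    · rw [← hT.map_add, sub_add_cancel]
      exact hE n' hn'

/-- Perturbation of `f` along one tile `S`. The coordinates available are the pairs `(n, j)` with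
`n ∈ S`, except those with `j = j0` and `n` in the set `E` of marker positions. The orbit segment
along `S` is seen, up to `ε`, by a map of dimension `w` per cube meeting `S`, and each such cube
provides at least `D (N - 1)^k - (N / r + 1)^k` available coordinates, so `hnum` gives the room
needed by `exists_perturbation`. -/
theorem exists_tile_map {k D : ℕ} {X : Type*} [MetricSpace X] [CompactSpace X]
    {T : (Fin k → ℤ) → X → X} (hT : IsZkAction T) {A : Set X} {r : ℕ} (hr : 1 ≤ r)
    (hA : ∀ x ∈ A, ∀ g : Fin k → ℤ, g ≠ 0 → (∀ i, |g i| < r) → T g x ∉ A)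
    (j0 : Fin D) {f : X → Fin D → ℝ} (hf : Continuous f) {ε δ : ℝ} (hδ : 0 < δ)
    (hmod : ∀ x y, dist x y < ε → ∀ j, |f x j - f y j| < δ)
    {N w : ℕ} (hN : 1 ≤ N) (hlow : LowDimMap T (zbox k N) ε w)
    (hnum : 2 * w + (N / r + 1) ^ k < D * (N - 1) ^ k)
    (S E : Finset (Fin k → ℤ)) (hES : E ⊆ S) (x0 : X) (hE : ∀ n ∈ E, T n x0 ∈ A)
    (hS0 : S.Nonempty)
    (hS : ∀ n ∈ S, ∀ u a : Fin k → ℤ, (∀ i, 0 ≤ n i - N * u i ∧ n i - N * u i < N) →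
      (∀ i, 0 ≤ a i ∧ a i < N - 1) → (fun i => (N - 1) * u i + a i) ∈ S) :
    ∃ F : X → (Fin k → ℤ) → Fin D → ℝ, (∀ n j, Continuous fun x => F x n j) ∧
      (∀ x n j, n ∈ S → ¬ (j = j0 ∧ n ∈ E) → |F x n j - f (T n x) j| < 2 * δ) ∧
      ∀ x y, (∀ n ∈ S, ∀ j, ¬ (j = j0 ∧ n ∈ E) → F x n j = F y n j) →
        ∀ n ∈ S, dist (T n x) (T n y) < ε := by
  classical
  have hN0 : (0 : ℤ) < N := by exact_mod_cast hN
  let C := cubeIndex N S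
  have hC0 : 0 < C.card := Finset.card_pos.2 (hS0.image _)
  have hlow' : LowDimMap T S ε (C.card * w) := by
    have := hlow.prod hT (C.image fun u i => (N : ℤ) * u i) S (fun n hn => by
      refine ⟨_, Finset.mem_image_of_mem _ (Finset.mem_image_of_mem _ hn), mem_zbox.2 fun i => ?_⟩
      have h1 := Int.emod_nonneg (n i) hN0.ne'
      have h2 := Int.emod_lt_of_pos (n i) hN0
      have h3 := Int.emod_add_mul_ediv (n i) N
      simp only [Pi.sub_apply]
      constructor <;> linarith)
    rwa [Finset.card_image_of_injective] at this
    intro u u' h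
    funext i
    exact mul_left_cancel₀ hN0.ne' (congrFun h i)
  obtain ⟨α, β, ι, hα, hβ, hι, Φ, P, hcard, hΦ, hP, hΦP, hfib⟩ := hlow'
  let J : Type := {q : S × Fin D // ¬ (q.2 = j0 ∧ (q.1 : Fin k → ℤ) ∈ E)}
  have hJ : 2 * Fintype.card α < Fintype.card J := by
    have h1 : Fintype.card J = S.card * D -
        Fintype.card {q : S × Fin D // q.2 = j0 ∧ (q.1 : Fin k → ℤ) ∈ E} := by
      rw [Fintype.card_subtype_compl]
      simp
    have h2 : Fintype.card {q : S × Fin D // q.2 = j0 ∧ (q.1 : Fin k → ℤ) ∈ E} ≤ E.card := by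
      rw [← Fintype.card_coe]
      refine Fintype.card_le_of_injective (fun q => ⟨q.1.1, q.2.2⟩) ?_
      rintro ⟨⟨⟨n, hn⟩, j⟩, hj, hq⟩ ⟨⟨⟨n', hn'⟩, j'⟩, hj', hq'⟩ h
      simp only [Subtype.mk.injEq] at h
      simp only at hj hj'
      subst h hj hj'
      rfl
    have h3 := card_marker_le hT hr hA N hN S E hES x0 hE
    have h4 := card_cubeIndex_mul_le N hN S hS
    have h5 : C.card * (2 * w + (N / r + 1) ^ k) < C.card * (D * (N - 1) ^ k) :=
      Nat.mul_lt_mul_of_pos_left hnum hC0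
    have h6 : C.card * (D * (N - 1) ^ k) ≤ S.card * D := by
      calc C.card * (D * (N - 1) ^ k) = C.card * (N - 1) ^ k * D := by ring
        _ ≤ _ := Nat.mul_le_mul_right _ h4
    have h7 : C.card * (2 * w + (N / r + 1) ^ k) =
      2 * (C.card * w) + C.card * (N / r + 1) ^ k := by ring
    change E.card ≤ C.card * (N / r + 1) ^ k at h3
    omega
  obtain ⟨F, hF, hFp, hFinj⟩ := exists_perturbation hJ P hP Φ hΦ hΦP
    (fun x (q : J) => f (T (q.1.1 : Fin k → ℤ) x) q.1.2)
    (continuous_pi fun q => (continuous_apply _).comp (hf.comp (hT.cont _))) δ hδ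
    (fun x y hxy q => hmod _ _ (hfib x y hxy _ q.1.1.2) _)
  refine ⟨fun x n j => if h : ∃ hn : n ∈ S, ¬ (j = j0 ∧ n ∈ E) then
    F x ⟨(⟨n, h.1⟩, j), h.2⟩ else 0, fun n j => ?_, fun x n j hn hj => ?_, fun x y h n hn => ?_⟩
  · by_cases h : ∃ hn : n ∈ S, ¬ (j = j0 ∧ n ∈ E)
    · simp only [dif_pos h]
      exact (continuous_apply _).comp hF
    · simp only [dif_neg h]
      exact continuous_const
  · have h : ∃ hn : n ∈ S, ¬ (j = j0 ∧ n ∈ E) := ⟨hn, hj⟩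
    simp only [dif_pos h]
    exact hFp x ⟨(⟨n, hn⟩, j), hj⟩
  · refine hfib x y (hFinj x y ?_) n hn
    funext q
    obtain ⟨⟨⟨m, hm⟩, j⟩, hq⟩ := q
    have h1 := h m hm j hq
    have h : ∃ hn : m ∈ S, ¬ (j = j0 ∧ m ∈ E) := ⟨hm, hq⟩
    simp only [dif_pos h] at h1
    exact h1

/-! ### Admissible maps and the density step -/

/-- The maps among which a generic one is sought: values in the unit cube, and the coordinate `j0`
carries the prescribed code `h` on the marker set `A` and is at most `1/2` off `A`. -/
structure Admissible {D : ℕ} {X : Type*} (A : Set X) (h : X → ℝ) (j0 : Fin D)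
    (f : X → Fin D → ℝ) : Prop where
  nonneg : ∀ x j, 0 ≤ f x j
  le_one : ∀ x j, f x j ≤ 1
  eq_on : ∀ x ∈ A, f x j0 = h x
  le_half : ∀ x ∉ A, f x j0 ≤ 1 / 2

/-- The affine bijection from `[-2δ, c + 2δ]` to `[0, c]` brings a `2δ`-perturbation of a value in
`[0, c]` back into `[0, c]` and moves it by at most `2δ`. -/
theorem squeeze_bounds {c δ v w : ℝ} (hc : 0 < c) (hδ : 0 < δ) (hw0 : 0 ≤ w) (hwc : w ≤ c)
    (hv : |v - w| < 2 * δ) :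
    0 ≤ (v + 2 * δ) * (c / (c + 4 * δ)) ∧ (v + 2 * δ) * (c / (c + 4 * δ)) ≤ c ∧
      |(v + 2 * δ) * (c / (c + 4 * δ)) - w| ≤ 4 * δ := by
  obtain ⟨h1, h2⟩ := abs_lt.1 hv
  have hp : 0 < c + 4 * δ := by linarith
  have e : (v + 2 * δ) * (c / (c + 4 * δ)) = (v + 2 * δ) * c / (c + 4 * δ) := by ring
  rw [e]
  refine ⟨by apply div_nonneg _ hp.le; exact mul_nonneg (by linarith) hc.le, ?_, ?_⟩
  · rw [div_le_iff₀ hp]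
    nlinarith
  · have e2 : (v + 2 * δ) * c / (c + 4 * δ) - w
        = (v - w) + (2 * δ * (c - 2 * v)) / (c + 4 * δ) := by
      field_simp
      ring
    have h3 : |(2 * δ * (c - 2 * v)) / (c + 4 * δ)| ≤ 2 * δ := by
      rw [abs_le]
      constructor
      · rw [le_div_iff₀ hp]
        nlinarith
      · rw [div_le_iff₀ hp]
        nlinarith
    rw [e2]
    calc _ ≤ |v - w| + _ := abs_add_le _ _
      _ ≤ 2 * δ + 2 * δ := add_le_add hv.le h3
      _ = 4 * δ := by ring

/-- Density step. An admissible map can be perturbed to an admissible map whose orbit map separates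
points of a common `π`-fibre up to `η`. On each tile of the Voronoi tiling the map is replaced by
the one from `exists_tile_map`; as the tiling and the marker positions are locally constant and
determined by `π`, this is continuous, and two points in one fibre of `π` use the same tile map. -/
theorem exists_admissible_separating {k l D : ℕ} {X : Type*} [MetricSpace X] [CompactSpace X]
    {T : (Fin k → ℤ) → X → X} (hT : IsZkAction T)
    {π : X → ((Fin k → ℤ) → Fin l)} (hπ : Continuous π)
    (hequiv : ∀ g x, π (T g x) = fun n => π x (n + g))
    (hfree : ∀ x g, g ≠ 0 → π (T g x) ≠ π x)
    {A : Set X} (hAc : IsClopen A) (hAs : ∀ x y, π x = π y → (x ∈ A ↔ y ∈ A))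
    {r : ℕ} (hr : 1 ≤ r)
    (hA : ∀ x ∈ A, ∀ g : Fin k → ℤ, g ≠ 0 → (∀ i, |g i| < r) → T g x ∉ A)
    (hlow : ∀ ε : ℝ, 0 < ε → ∃ N w : ℕ, 1 ≤ N ∧ LowDimMap T (zbox k N) ε w ∧
      2 * w + (N / r + 1) ^ k < D * (N - 1) ^ k)
    (h : X → ℝ) (j0 : Fin D) {f : X → Fin D → ℝ} (hf : Continuous f)
    (hadm : Admissible A h j0 f) {δ η : ℝ} (hδ : 0 < δ) (hη : 0 < η) :
    ∃ g : X → Fin D → ℝ, Continuous g ∧ Admissible A h j0 g ∧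
      (∀ x j, |g x j - f x j| ≤ 4 * δ) ∧
      ∀ x y, π x = π y → (∀ n, g (T n x) = g (T n y)) → dist x y < η := by
  classical
  obtain ⟨ε₀, hε₀, hmod₀⟩ := Metric.uniformContinuous_iff.1
    (CompactSpace.uniformContinuous_of_continuous hf) δ hδ
  set ε := min ε₀ η with hεdef
  have hε : 0 < ε := lt_min hε₀ hη
  have hmod : ∀ x y, dist x y < ε → ∀ j, |f x j - f y j| < δ := by
    intro x y hxy j
    have := hmod₀ (lt_of_lt_of_le hxy (min_le_left _ _))
    exact lt_of_le_of_lt (dist_le_pi_dist (f x) (f y) j) this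
  obtain ⟨N, w, hN, hlw, hnum⟩ := hlow ε hε
  obtain ⟨off, hoffc, hoffs, hoff0, hoffsh⟩ := exists_voronoi hT hπ hequiv hfree N hN
  let Bl : Finset (Fin k → ℤ) := hoffc.range_finite.toFinset.image fun c => -c
  have hBl : ∀ z, -off z ∈ Bl := fun z =>
    Finset.mem_image.2 ⟨off z, hoffc.range_finite.mem_toFinset.2 ⟨z, rfl⟩, rfl⟩
  -- For a tile centre `x`: `S x` is its tile, `E x` the marker positions in it, `τ x` the pair.
  let S : X → Finset (Fin k → ℤ) := fun x => Bl.filter fun n => off (T n x) = -n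
  have hSmem : ∀ x n, n ∈ S x ↔ off (T n x) = -n := by
    intro x n
    refine ⟨fun hn => (Finset.mem_filter.1 hn).2, fun hn => Finset.mem_filter.2 ⟨?_, hn⟩⟩
    have := hBl (T n x)
    rwa [hn, neg_neg] at this
  let E : X → Finset (Fin k → ℤ) := fun x => (S x).filter fun n => T n x ∈ A
  let τ : X → Finset (Fin k → ℤ) × Finset (Fin k → ℤ) := fun x => (S x, E x)
  have hτ_of : ∀ x y, (∀ n ∈ Bl, off (T n x) = off (T n y)) →
      (∀ n ∈ Bl, (T n x ∈ A ↔ T n y ∈ A)) → τ x = τ y := by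
    intro x y h1 h2
    have e1 : S x = S y := Finset.filter_congr fun n hn => by rw [h1 n hn]
    have e2 : E x = E y := by
      change (S x).filter _ = (S y).filter _
      rw [e1]
      exact Finset.filter_congr fun n hn => h2 n (Finset.mem_filter.1 hn).1
    exact Prod.ext e1 e2
  have hτs : ∀ x y, π x = π y → τ x = τ y := by
    intro x y hxy
    have hn : ∀ n, π (T n x) = π (T n y) := fun n => by rw [hequiv, hequiv, hxy]
    exact hτ_of x y (fun n _ => hoffs _ _ (hn n)) fun n _ => hAs _ _ (hn n)
  have hτloc : ∀ x, ∀ᶠ y in 𝓝 x, τ y = τ x := by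
    intro x
    have h1 : ∀ᶠ y in 𝓝 x, ∀ n ∈ Bl, off (T n y) = off (T n x) := by
      rw [Filter.eventually_all_finset]
      intro n _
      exact (hT.cont n).continuousAt.eventually (hoffc.eventually_eq (T n x))
    have h2 : ∀ᶠ y in 𝓝 x, ∀ n ∈ Bl, (T n y ∈ A ↔ T n x ∈ A) := by
      rw [Filter.eventually_all_finset]
      intro n _
      exact eventually_mem_iff_of_isClopen (hAc.preimage (hT.cont n)) x
    filter_upwards [h1, h2] with y hy1 hy2
    exact hτ_of y x hy1 hy2
  -- One tile map for each tile type `p`, common to all tiles of that type.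
  have hF : ∀ p : Finset (Fin k → ℤ) × Finset (Fin k → ℤ),
      ∃ F : X → (Fin k → ℤ) → Fin D → ℝ, (∃ x0, off x0 = 0 ∧ τ x0 = p) →
      (∀ n j, Continuous fun x => F x n j) ∧
      (∀ x n j, n ∈ p.1 → ¬ (j = j0 ∧ n ∈ p.2) → |F x n j - f (T n x) j| < 2 * δ) ∧
      ∀ x y, (∀ n ∈ p.1, ∀ j, ¬ (j = j0 ∧ n ∈ p.2) → F x n j = F y n j) →
        ∀ n ∈ p.1, dist (T n x) (T n y) < ε := by
    intro p
    by_cases hp : ∃ x0, off x0 = 0 ∧ τ x0 = p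
    · obtain ⟨x0, h0, rfl⟩ := hp
      obtain ⟨F, hF⟩ := exists_tile_map hT hr hA j0 hf hδ hmod hN hlw hnum (S x0) (E x0)
        (Finset.filter_subset _ _) x0 (fun n hn => (Finset.mem_filter.1 hn).2)
        ⟨0, (hSmem x0 0).2 (by rw [hT.map_zero, h0, neg_zero])⟩
        (fun n hn u a hu ha => (hSmem x0 _).2 (hoffsh x0 h0 n u a ((hSmem x0 n).1 hn) hu ha))
      exact ⟨F, fun _ => hF⟩
    · exact ⟨fun _ _ _ => 0, fun h => (hp h).elim⟩
  choose F hF using hF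
  -- The bound on the coordinate `j` off the marker set.
  let c : Fin D → ℝ := fun j => if j = j0 then 1 / 2 else 1
  have hc0 : ∀ j, 0 < c j := fun j => by
    simp only [c]; split_ifs <;> norm_num
  have hc1 : ∀ j, c j ≤ 1 := fun j => by
    simp only [c]; split_ifs <;> norm_num
  let base : X → X := fun z => T (off z) z
  let G : X → Fin D → ℝ := fun z j =>
    (F (τ (base z)) (base z) (-off z) j + 2 * δ) * (c j / (c j + 4 * δ))
  let g : X → Fin D → ℝ := fun z j => if j = j0 ∧ z ∈ A then f z j else G z j
  have hFb : ∀ z, _ := fun z => hF (τ (base z)) ⟨base z, hoff0 z, rfl⟩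
  have hback : ∀ z, T (-off z) (base z) = z := fun z => hT.neg_cancel _ _
  have hmS : ∀ z, -off z ∈ S (base z) := fun z => by
    rw [hSmem, hback, neg_neg]
  have hG : ∀ z j, ¬ (j = j0 ∧ z ∈ A) →
      0 ≤ G z j ∧ G z j ≤ c j ∧ |G z j - f z j| ≤ 4 * δ := by
    intro z j hj
    have h1 := (hFb z).2.1 (base z) (-off z) j (hmS z) (by
      rintro ⟨e, hn⟩
      have := (Finset.mem_filter.1 hn).2
      rw [hback] at this
      exact hj ⟨e, this⟩)
    rw [hback] at h1
    refine squeeze_bounds (hc0 j) hδ (hadm.nonneg z j) ?_ h1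
    by_cases e : j = j0
    · subst e
      simp only [c, if_true]
      exact hadm.le_half z fun hz => hj ⟨rfl, hz⟩
    · simp only [c, e, if_false]
      exact hadm.le_one z j
  refine ⟨g, ?_, ⟨?_, ?_, ?_, ?_⟩, ?_, ?_⟩
  · refine continuous_pi fun j => continuous_iff_continuousAt.2 fun z => ?_
    have hA1 := eventually_mem_iff_of_isClopen hAc z
    by_cases hj : j = j0 ∧ z ∈ A
    · refine ContinuousAt.congr (f := fun z => f z j) (((continuous_apply j).comp hf).continuousAt) ?_
      filter_upwards [hA1] with y hy
      have : j = j0 ∧ y ∈ A := ⟨hj.1, hy.2 hj.2⟩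
      simp only [g, if_pos this]
    · have hcF : Continuous fun y => (F (τ (base z)) (T (off z) y) (-off z) j + 2 * δ)
          * (c j / (c j + 4 * δ)) :=
        ((((hFb z).1 (-off z) j).comp (hT.cont (off z))).add continuous_const).mul
          continuous_const
      refine hcF.continuousAt.congr ?_
      have hb : ∀ᶠ y in 𝓝 z, τ (T (off z) y) = τ (base z) :=
        (hT.cont (off z)).continuousAt.eventually (hτloc (base z))
      filter_upwards [hA1, hoffc.eventually_eq z, hb] with y hy ho hτy
      have : ¬ (j = j0 ∧ y ∈ A) := fun h' => hj ⟨h'.1, hy.1 h'.2⟩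
      simp only [g, if_neg this, G, base, ho, hτy]
  · intro z j
    by_cases hj : j = j0 ∧ z ∈ A
    · simp only [g, if_pos hj]; exact hadm.nonneg z j
    · simp only [g, if_neg hj]; exact (hG z j hj).1
  · intro z j
    by_cases hj : j = j0 ∧ z ∈ A
    · simp only [g, if_pos hj]; exact hadm.le_one z j
    · simp only [g, if_neg hj]; exact (hG z j hj).2.1.trans (hc1 j)
  · intro z hz
    have hj : j0 = j0 ∧ z ∈ A := ⟨rfl, hz⟩
    simp only [g, if_pos hj]; exact hadm.eq_on z hz
  · intro z hz
    have hj : ¬ (j0 = j0 ∧ z ∈ A) := fun h' => hz h'.2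
    simp only [g, if_neg hj]
    have := (hG z j0 hj).2.1
    simpa only [c, if_true] using this
  · intro z j
    by_cases hj : j = j0 ∧ z ∈ A
    · simp only [g, if_pos hj, sub_self, abs_zero]; linarith
    · simp only [g, if_neg hj]; exact (hG z j hj).2.2
  · intro x y hxy heq
    have ho : off x = off y := hoffs x y hxy
    have hb : π (base x) = π (base y) := by
      simp only [base]; rw [ho, hequiv, hequiv, hxy]
    have hτe : τ (base x) = τ (base y) := hτs _ _ hb
    have key : ∀ p, off p = 0 → ∀ n ∈ S p, ∀ j, ¬ (j = j0 ∧ n ∈ E p) →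
        g (T n p) j = (F (τ p) p n j + 2 * δ) * (c j / (c j + 4 * δ)) := by
      intro p hp n hn j hj
      have ho' : off (T n p) = -n := (hSmem p n).1 hn
      have : ¬ (j = j0 ∧ T n p ∈ A) := fun h' => hj ⟨h'.1, Finset.mem_filter.2 ⟨hn, h'.2⟩⟩
      have hbase : base (T n p) = p := by
        simp only [base]; rw [ho', hT.neg_cancel]
      simp only [g, if_neg this, G, hbase, ho', neg_neg]
    have hd := (hFb x).2.2 (base x) (base y) (by
      intro n hn j hj
      have k1 := key (base x) (hoff0 x) n hn j hj
      have hn' : n ∈ S (base y) := by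
        have : S (base x) = S (base y) := congrArg Prod.fst hτe
        rwa [← this]
      have hj' : ¬ (j = j0 ∧ n ∈ E (base y)) := by
        have : E (base x) = E (base y) := congrArg Prod.snd hτe
        rwa [← this]
      have k2 := key (base y) (hoff0 y) n hn' j hj'
      have e : g (T n (base x)) j = g (T n (base y)) j := by
        simp only [base]
        rw [← hT.map_add, ← hT.map_add, ho, heq]
      rw [k1, k2, ← hτe] at e
      have hpos : c j / (c j + 4 * δ) ≠ 0 :=
        (div_pos (hc0 j) (by have := hc0 j; linarith)).ne'
      have := mul_right_cancel₀ hpos e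
      linarith) (-off x) (hmS x)
    rw [hback, ho, hback] at hd
    exact lt_of_lt_of_le hd (min_le_right _ _)

/-! ### Baire category -/

/-- The orbit map of an admissible `f` determines `π`: the markers are read off from `f _ j0 > 1/2`,
and at a marker this coordinate is the injective code of `π`. -/
theorem Admissible.map_eq_of_orbit_eq {k l D : ℕ} {X : Type*} [TopologicalSpace X]
    {T : (Fin k → ℤ) → X → X} (hT : IsZkAction T)
    {π : X → ((Fin k → ℤ) → Fin l)}
    (hequiv : ∀ g x, π (T g x) = fun n => π x (n + g))
    {A : Set X} (hcov : ∀ x, ∃ g, T g x ∈ A)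
    {h : X → ℝ} (h34 : ∀ x, 3 / 4 ≤ h x) (hinj : ∀ x y, h x = h y → π x = π y)
    {j0 : Fin D} {f : X → Fin D → ℝ} (hf : Admissible A h j0 f)
    {x y : X} (hxy : ∀ n, f (T n x) = f (T n y)) : π x = π y := by
  obtain ⟨g, hg⟩ := hcov x
  have hg' : T g y ∈ A := by
    by_contra hn
    have h1 := hf.le_half _ hn
    rw [← hxy, hf.eq_on _ hg] at h1
    linarith [h34 (T g x)]
  have e : π (T g x) = π (T g y) := by
    apply hinj
    rw [← hf.eq_on _ hg, ← hf.eq_on _ hg', hxy]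
  have e2 : π (T (-g) (T g x)) = π (T (-g) (T g y)) := by
    rw [hequiv (-g), hequiv (-g), e]
  rwa [hT.neg_cancel, hT.neg_cancel] at e2

/-- The complement is the projection of a closed set along the compact space `X × X`. -/
theorem isOpen_separating {k D : ℕ} {X : Type*} [MetricSpace X] [CompactSpace X]
    {T : (Fin k → ℤ) → X → X} (hT : IsZkAction T) (η : ℝ) :
    IsOpen {f : C(X, Fin D → ℝ) | ∀ x y, (∀ n, f (T n x) = f (T n y)) → dist x y < η} := by
  let K : Set (C(X, Fin D → ℝ) × (X × X)) :=
    {p | (∀ n, p.1 (T n p.2.1) = p.1 (T n p.2.2)) ∧ η ≤ dist p.2.1 p.2.2}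
  have hK : IsClosed K := by
    have e : K = (⋂ n, {p | p.1 (T n p.2.1) = p.1 (T n p.2.2)}) ∩
        {p | η ≤ dist p.2.1 p.2.2} := by
      ext p
      simp only [K, Set.mem_inter_iff, Set.mem_iInter, Set.mem_ofPred_eq]
    rw [e]
    refine (isClosed_iInter fun n => ?_).inter (isClosed_le continuous_const (by fun_prop))
    have := hT.cont n
    exact isClosed_eq (by fun_prop) (by fun_prop)
  have := (isClosedMap_fst_of_compactSpace (X := C(X, Fin D → ℝ)) (Y := X × X)) K hK
  convert this.isOpen_compl using 1
  ext f
  constructor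
  · rintro hf ⟨⟨f', x, y⟩, ⟨h1, h2⟩, rfl⟩
    exact absurd (hf x y h1) (not_lt.2 h2)
  · intro hf x y hxy
    by_contra hn
    exact hf ⟨(f, x, y), ⟨hxy, not_lt.1 hn⟩, rfl⟩

theorem isClosed_admissible {D : ℕ} {X : Type*} [TopologicalSpace X] [CompactSpace X]
    (A : Set X) (h : X → ℝ) (j0 : Fin D) :
    IsClosed {f : C(X, Fin D → ℝ) | Admissible A h j0 f} := by
  have hev : ∀ x j, Continuous fun f : C(X, Fin D → ℝ) => f x j := fun x j => by fun_prop
  have e : {f : C(X, Fin D → ℝ) | Admissible A h j0 f} =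
      (⋂ (x) (j), {f | 0 ≤ f x j}) ∩ (⋂ (x) (j), {f | f x j ≤ 1}) ∩
      (⋂ x ∈ A, {f | f x j0 = h x}) ∩ ⋂ (x) (_ : x ∉ A), {f | f x j0 ≤ 1 / 2} := by
    ext f
    simp only [Set.mem_inter_iff, Set.mem_iInter, Set.mem_ofPred_eq]
    exact ⟨fun ⟨a, b, c, d⟩ => ⟨⟨⟨a, b⟩, c⟩, d⟩, fun ⟨⟨⟨a, b⟩, c⟩, d⟩ => ⟨a, b, c, d⟩⟩
  rw [e]
  refine ((IsClosed.inter ?_ ?_).inter ?_).inter ?_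
  · exact isClosed_iInter fun x => isClosed_iInter fun j => isClosed_le continuous_const (hev x j)
  · exact isClosed_iInter fun x => isClosed_iInter fun j => isClosed_le (hev x j) continuous_const
  · exact isClosed_iInter fun x => isClosed_iInter fun _ => isClosed_eq (hev x j0) continuous_const
  · exact isClosed_iInter fun x => isClosed_iInter fun _ => isClosed_le (hev x j0) continuous_const

/-- The admissible maps form a complete metric space, and those whose orbit map has fibres of
diameter `< 1/(m+1)` form a dense open subset of it, so by Baire there is an admissible map with
injective orbit map. -/
theorem exists_admissible_injective {k l D : ℕ} {X : Type*} [MetricSpace X] [CompactSpace X]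
    {T : (Fin k → ℤ) → X → X} (hT : IsZkAction T)
    {π : X → ((Fin k → ℤ) → Fin l)} (hπ : Continuous π)
    (hequiv : ∀ g x, π (T g x) = fun n => π x (n + g))
    (hfree : ∀ x g, g ≠ 0 → π (T g x) ≠ π x)
    {A : Set X} (hAc : IsClopen A) (hAs : ∀ x y, π x = π y → (x ∈ A ↔ y ∈ A))
    {r : ℕ} (hr : 1 ≤ r)
    (hA : ∀ x ∈ A, ∀ g : Fin k → ℤ, g ≠ 0 → (∀ i, |g i| < r) → T g x ∉ A)
    (hcov : ∀ x, ∃ g, T g x ∈ A)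
    (hlow : ∀ ε : ℝ, 0 < ε → ∃ N w : ℕ, 1 ≤ N ∧ LowDimMap T (zbox k N) ε w ∧
      2 * w + (N / r + 1) ^ k < D * (N - 1) ^ k)
    {h : X → ℝ} (hcont : Continuous h) (h34 : ∀ x, 3 / 4 ≤ h x) (h1 : ∀ x, h x ≤ 1)
    (hinj : ∀ x y, h x = h y → π x = π y) (j0 : Fin D) :
    ∃ f : X → Fin D → ℝ, Continuous f ∧ Admissible A h j0 f ∧
      ∀ x y, (∀ n, f (T n x) = f (T n y)) → x = y := by
  classical
  let 𝓕 : Set C(X, Fin D → ℝ) := {f | Admissible A h j0 f}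
  have h𝓕 : IsClosed 𝓕 := isClosed_admissible A h j0
  have : CompleteSpace 𝓕 := h𝓕.completeSpace_coe
  have : Nonempty 𝓕 := by
    let f0 : X → Fin D → ℝ := fun x j => if j = j0 then A.indicator h x else 0
    have hf0 : Continuous f0 := by
      refine continuous_pi fun j => ?_
      by_cases e : j = j0
      · simp only [f0, e, if_true]
        exact hcont.indicator (fun a ha => by rw [hAc.frontier_eq] at ha; exact ha.elim)
      · simp only [f0, e, if_false]
        exact continuous_const
    have hb : ∀ x, 0 ≤ A.indicator h x ∧ A.indicator h x ≤ 1 := by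
      intro x
      by_cases hx : x ∈ A
      · rw [Set.indicator_of_mem hx]
        exact ⟨by linarith [h34 x], h1 x⟩
      · rw [Set.indicator_of_notMem hx]
        norm_num
    refine ⟨⟨⟨f0, hf0⟩, ⟨?_, ?_, ?_, ?_⟩⟩⟩
    · intro x j
      change 0 ≤ f0 x j
      simp only [f0]
      split_ifs
      exacts [(hb x).1, le_rfl]
    · intro x j
      change f0 x j ≤ 1
      simp only [f0]
      split_ifs
      exacts [(hb x).2, zero_le_one]
    · intro x hx
      change f0 x j0 = h x
      simp only [f0, if_true, Set.indicator_of_mem hx]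
    · intro x hx
      change f0 x j0 ≤ 1 / 2
      simp only [f0, if_true, Set.indicator_of_notMem hx]
      norm_num
  let G : ℕ → Set 𝓕 := fun m => (↑) ⁻¹' {f : C(X, Fin D → ℝ) |
    ∀ x y, (∀ n, f (T n x) = f (T n y)) → dist x y < 1 / ((m : ℝ) + 1)}
  have hGo : ∀ m, IsOpen (G m) := fun m => (isOpen_separating hT _).preimage continuous_subtype_val
  have hGd : ∀ m, Dense (G m) := by
    intro m
    rw [Metric.dense_iff]
    intro f ρ hρ
    obtain ⟨g, hgc, hga, hgf, hgs⟩ := exists_admissible_separating hT hπ hequiv hfree hAc hAs hr hA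
      hlow h j0 f.1.continuous f.2 (δ := ρ / 8) (η := 1 / ((m : ℝ) + 1)) (by linarith)
      (by positivity)
    refine ⟨⟨⟨g, hgc⟩, hga⟩, ?_, ?_⟩
    · rw [Metric.mem_ball, Subtype.dist_eq]
      refine lt_of_le_of_lt ((ContinuousMap.dist_le (by linarith : 0 ≤ ρ / 2)).2 fun x => ?_)
        (by linarith : ρ / 2 < ρ)
      refine (dist_pi_le_iff (by linarith)).2 fun j => ?_
      refine (hgf x j).trans (by linarith)
    · intro x y hxy
      exact hgs x y (hga.map_eq_of_orbit_eq hT hequiv hcov h34 hinj hxy) hxy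
  obtain ⟨f, hf⟩ := (dense_iInter_of_isOpen_nat hGo hGd).nonempty
  refine ⟨f.1, f.1.continuous, f.2, fun x y hxy => ?_⟩
  rw [← dist_le_zero]
  refine le_of_forall_pos_lt_add fun ε hε => ?_
  obtain ⟨m, hm⟩ := exists_nat_one_div_lt hε
  have := Set.mem_iInter.1 hf m x y hxy
  linarith

/-- The full shift on finitely many symbols embeds continuously into `[3/4, 1]`. -/
theorem exists_injective_code (k l : ℕ) :
    ∃ h : ((Fin k → ℤ) → Fin l) → ℝ, Continuous h ∧ Function.Injective h ∧
      ∀ z, 3 / 4 ≤ h z ∧ h z ≤ 1 := by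
  classical
  obtain ⟨e, he⟩ : ∃ e : (Fin k → ℤ) × Fin l → ℕ, Function.Injective e := exists_injective_nat _
  -- The bit with index `e (m, s)` records whether `z m = s`; ternary expansion encodes the bits.
  let b : ((Fin k → ℤ) → Fin l) → ℕ → Bool := fun z n =>
    decide (∃ p, e p = n ∧ z p.1 = p.2)
  have hb : Function.Injective b := by
    intro z z' hz
    funext m
    have := congrFun hz (e (m, z m))
    have h1 : b z (e (m, z m)) = true := decide_eq_true ⟨_, rfl, rfl⟩
    rw [h1] at this
    obtain ⟨p, hp, hp'⟩ := of_decide_eq_true this.symm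
    have := he hp
    subst this
    exact hp'.symm
  have h3 : (0 : ℝ) ≤ 1 / 3 := by norm_num
  have h3' : (1 / 3 : ℝ) < 1 := by norm_num
  let q : ((Fin k → ℤ) → Fin l) → ℝ := fun z => Cardinal.cantorFunction (1 / 3) (b z)
  have hbnd : ∀ (u : ℕ → Bool) n, |Cardinal.cantorFunctionAux (1 / 3 : ℝ) u n| ≤ (1 / 3 : ℝ) ^ n := by
    intro u n
    rw [abs_of_nonneg (Cardinal.cantorFunctionAux_nonneg h3)]
    cases hu : u n
    · rw [Cardinal.cantorFunctionAux_false hu]; positivity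
    · rw [Cardinal.cantorFunctionAux_true hu]
  have hqc : Continuous q := by
    refine continuous_tsum (u := fun n => (1 / 3 : ℝ) ^ n) ?_
      (summable_geometric_of_lt_one h3 h3') fun n z => hbnd (b z) n
    intro n
    have hbn : Continuous fun z => b z n := by
      by_cases hn : ∃ p, e p = n
      · obtain ⟨p, rfl⟩ := hn
        have : (fun z => b z (e p)) = (fun c : Fin l => decide (c = p.2)) ∘ fun z => z p.1 := by
          funext z
          simp only [b, Function.comp]
          refine decide_eq_decide.2 ⟨?_, fun h => ⟨p, rfl, h⟩⟩
          rintro ⟨p', hp', h⟩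
          rwa [he hp'] at h
        rw [this]
        exact continuous_of_discreteTopology.comp (continuous_apply p.1)
      · have : (fun z => b z n) = fun _ => false := by
          funext z
          exact decide_eq_false fun ⟨p, hp, _⟩ => hn ⟨p, hp⟩
        rw [this]
        exact continuous_const
    have : (fun z => Cardinal.cantorFunctionAux (1 / 3 : ℝ) (b z) n)
        = (fun t : Bool => cond t ((1 / 3 : ℝ) ^ n) 0) ∘ fun z => b z n := rfl
    rw [this]
    exact continuous_of_discreteTopology.comp hbn
  have hq0 : ∀ z, 0 ≤ q z := fun z =>
    tsum_nonneg fun n => Cardinal.cantorFunctionAux_nonneg h3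
  have hq1 : ∀ z, q z ≤ 3 / 2 := by
    intro z
    have : q z ≤ ∑' n, (1 / 3 : ℝ) ^ n :=
      Summable.tsum_le_tsum (fun n => (le_abs_self _).trans (hbnd (b z) n))
        (Cardinal.summable_cantor_function _ h3 h3') (summable_geometric_of_lt_one h3 h3')
    rw [tsum_geometric_of_lt_one h3 h3'] at this
    norm_num at this ⊢
    exact this
  refine ⟨fun z => 3 / 4 + q z / 6, by fun_prop, ?_, fun z => ⟨?_, ?_⟩⟩
  · intro z z' hz
    have : q z = q z' := by simp only at hz; linarith
    exact hb (Cardinal.cantorFunction_injective (by norm_num) (by norm_num) this)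
  · have := hq0 z; linarith
  · have := hq1 z; linarith

/-! ### Dimension count and conclusion -/

/-- Choice of the marker separation `r`: the marker positions cost about a fraction `r^{-k}` of the
coordinates in large cubes, which fits into the gap between `2c` and `D` when `1/r < D - 2c`. -/
theorem exists_scale (k D : ℕ) (hk : 1 ≤ k) (c : ℝ) (hcD : 2 * c < D) :
    ∃ r : ℕ, 1 ≤ r ∧ ∀ᶠ L : ℕ in atTop, ∀ w : ℕ, (w : ℝ) ≤ c * (L : ℝ) ^ k →
      2 * w + (L / r + 1) ^ k < D * (L - 1) ^ k := by
  obtain ⟨m, hm⟩ := exists_nat_one_div_lt (sub_pos.2 hcD)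
  refine ⟨m + 1, by omega, ?_⟩
  set ρ : ℝ := 1 / ((m : ℝ) + 1) with hρ
  have hρ0 : 0 ≤ ρ := by positivity
  have hρ1 : ρ ≤ 1 := by
    rw [hρ, div_le_one (by positivity)]
    have : (0 : ℝ) ≤ m := by positivity
    linarith
  have hρk : ρ ^ k ≤ ρ := pow_le_of_le_one hρ0 hρ1 (by omega)
  let φ : ℝ → ℝ := fun t => D * (1 - t) ^ k - 2 * c - (ρ + t) ^ k
  have hφ : Continuous φ := by fun_prop
  have hφ0 : 0 < φ 0 := by
    simp only [φ, sub_zero, one_pow, add_zero]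
    linarith
  have hev : ∀ᶠ L : ℕ in atTop, 0 < φ (1 / (L : ℝ)) :=
    (hφ.tendsto 0).comp tendsto_one_div_atTop_nhds_zero_nat |>.eventually (lt_mem_nhds hφ0)
  filter_upwards [hev, eventually_ge_atTop 1] with L hL hL1 w hw
  have hLpos : (0 : ℝ) < L := by exact_mod_cast hL1
  have hLk : (0 : ℝ) < (L : ℝ) ^ k := by positivity
  have h1 := mul_pos hL hLk
  have e : φ (1 / (L : ℝ)) * (L : ℝ) ^ k
      = D * ((L : ℝ) - 1) ^ k - 2 * (c * (L : ℝ) ^ k) - (ρ * L + 1) ^ k := by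
    simp only [φ]
    have e1 : (L : ℝ) - 1 = (1 - 1 / L) * L := by field_simp
    have e2 : ρ * L + 1 = (ρ + 1 / L) * L := by field_simp
    rw [e1, e2, mul_pow, mul_pow]
    ring
  rw [e] at h1
  have h2 : (((L / (m + 1) : ℕ) : ℝ) + 1) ^ k ≤ (ρ * L + 1) ^ k := by
    apply pow_le_pow_left₀ (by positivity)
    have := @Nat.cast_div_le ℝ _ _ _ L (m + 1)
    push_cast at this
    have e3 : ρ * L = (L : ℝ) / ((m : ℝ) + 1) := by rw [hρ]; ring
    linarith
  have : ((2 * w + (L / (m + 1) + 1) ^ k : ℕ) : ℝ) < ((D * (L - 1) ^ k : ℕ) : ℝ) := by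
    push_cast [Nat.cast_sub hL1]
    linarith
  exact_mod_cast this

/-- The dimension count supplied by `mdim X < D/2`. The separation `r` is uniform in `ε`; a cube size
`N₀` that realises a small `widim` is replaced by a large multiple via `LowDimMap.prod`. -/
theorem exists_lowDimMap_of_mdim_lt {k D : ℕ} (hk : 1 ≤ k) {X : Type*} [MetricSpace X]
    [CompactSpace X] {T : (Fin k → ℤ) → X → X} (hT : IsZkAction T)
    (hmdim : mdim X T < (D : ℝ≥0∞) / 2) :
    ∃ r : ℕ, 1 ≤ r ∧ ∀ ε : ℝ, 0 < ε → ∃ N w : ℕ, 1 ≤ N ∧ LowDimMap T (zbox k N) ε w ∧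
      2 * w + (N / r + 1) ^ k < D * (N - 1) ^ k := by
  obtain ⟨c, hc1, hc2⟩ := ENNReal.lt_iff_exists_nnreal_btwn.1 hmdim
  have hcD : 2 * (c : ℝ) < D := by
    rw [ENNReal.lt_div_iff_mul_lt (by simp) (by simp)] at hc2
    have : c * 2 < (D : ℝ≥0) := by exact_mod_cast hc2
    have : (c : ℝ) * 2 < D := by exact_mod_cast this
    linarith
  obtain ⟨r, hr, hev⟩ := exists_scale k D hk c hcD
  refine ⟨r, hr, fun ε hε => ?_⟩
  have h1 : (⨅ (N : ℕ) (_ : 1 ≤ N), (widim X (blockRho T dist N) ε : ℝ≥0∞) / (N : ℝ≥0∞) ^ k)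
      < c := lt_of_le_of_lt (le_iSup₂ (f := fun (ε : ℝ) (_ : 0 < ε) => ⨅ (N : ℕ) (_ : 1 ≤ N),
        (widim X (blockRho T dist N) ε : ℝ≥0∞) / (N : ℝ≥0∞) ^ k) ε hε) hc1
  simp only [iInf_lt_iff] at h1
  obtain ⟨N₀, hN₀, h1⟩ := h1
  set w₀ := widim X (blockRho T dist N₀) ε with hw₀
  have hw : (w₀ : ℝ) ≤ c * (N₀ : ℝ) ^ k := by
    have hN0 : (N₀ : ℝ≥0∞) ^ k ≠ 0 := pow_ne_zero _ (by
      have : N₀ ≠ 0 := by omega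
      exact_mod_cast this)
    have hNt : (N₀ : ℝ≥0∞) ^ k ≠ ⊤ := ENNReal.pow_ne_top (by simp)
    rw [ENNReal.div_lt_iff (Or.inl hN0) (Or.inl hNt)] at h1
    have : (w₀ : ℝ≥0) < c * (N₀ : ℝ≥0) ^ k := by exact_mod_cast h1
    exact_mod_cast this.le
  have hmul : Tendsto (fun q : ℕ => q * N₀) atTop atTop :=
    tendsto_atTop_mono (fun q => Nat.le_mul_of_pos_right q hN₀) tendsto_id
  obtain ⟨q, hq, hq1⟩ := ((hmul.eventually hev).and (eventually_ge_atTop 1)).exists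
  let C : Finset (Fin k → ℤ) := (zbox k q).image fun u i => (N₀ : ℤ) * u i
  have hCcard : C.card ≤ q ^ k := Finset.card_image_le.trans (card_zbox k q).le
  have hprod := (lowDimMap_widim hT N₀ hε).prod hT C (zbox k (q * N₀)) (by
    intro g hg
    have hg := mem_zbox.1 hg
    have hN : (0 : ℤ) < N₀ := by exact_mod_cast hN₀
    refine ⟨fun i => (N₀ : ℤ) * (g i / N₀), Finset.mem_image.2 ⟨fun i => g i / N₀, ?_, rfl⟩, ?_⟩
    · refine mem_zbox.2 fun i => ⟨Int.ediv_nonneg (hg i).1 hN.le, ?_⟩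
      refine Int.ediv_lt_of_lt_mul hN ?_
      have := (hg i).2
      push_cast at this
      exact this
    · refine mem_zbox.2 fun i => ?_
      have e := Int.emod_add_mul_ediv (g i) N₀
      have h1 := Int.emod_nonneg (g i) hN.ne'
      have h2 := Int.emod_lt_of_pos (g i) hN
      simp only [Pi.sub_apply]
      constructor <;> linarith)
  refine ⟨q * N₀, _, Nat.mul_pos hq1 hN₀, hprod, hq _ ?_⟩
  rw [← hw₀]
  push_cast
  have : (C.card : ℝ) ≤ (q : ℝ) ^ k := by exact_mod_cast hCcard
  calc (C.card : ℝ) * w₀ ≤ (q : ℝ) ^ k * (c * (N₀ : ℝ) ^ k) :=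
        mul_le_mul this hw (by positivity) (by positivity)
    _ = c * ((q : ℝ) * N₀) ^ k := by rw [mul_pow]; ring

/-- **Theorem (embedding, aperiodic symbolic factor).** If a `ℤ^k`-system `X`
has an aperiodic symbolic factor and `mdim(X) < D/2`, then `X` embeds
equivariantly into the shift on `([0,1]^D)^{ℤ^k}`. -/
theorem stmt_3 (k D : ℕ) (hk : 1 ≤ k) (hD : 1 ≤ D)
    (X : Type*) [MetricSpace X] [CompactSpace X]
    (T : (Fin k → ℤ) → X → X) (hT : IsZkAction T)
    -- an aperiodic symbolic factor: a closed shift-invariant `Z ⊆ {1,…,l}^{ℤ^k}`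
    -- on which the shift acts freely, together with a factor map `π : X → Z`
    (l : ℕ) (hl : 1 ≤ l) (Z : Set ((Fin k → ℤ) → Fin l))
    (hZclosed : IsClosed Z)
    (hZinv : ∀ z ∈ Z, ∀ g : Fin k → ℤ, (fun n => z (n + g)) ∈ Z)
    (hZfree : ∀ z ∈ Z, ∀ g : Fin k → ℤ, g ≠ 0 → (fun n => z (n + g)) ≠ z)
    (π : X → ((Fin k → ℤ) → Fin l)) (hπcont : Continuous π)
    (hπrange : Set.range π = Z)
    (hπequiv : ∀ (g : Fin k → ℤ) (x : X), π (T g x) = fun n => π x (n + g))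
    (hmdim : mdim X T < (D : ℝ≥0∞) / 2) :
    ∃ φ : X → ((Fin k → ℤ) → Fin D → Set.Icc (0 : ℝ) 1),
      Topology.IsEmbedding φ ∧
      ∀ (g : Fin k → ℤ) (x : X), φ (T g x) = fun n => φ x (n + g) := by
  have hfree : ∀ x g, g ≠ 0 → π (T g x) ≠ π x := fun x g hg => by
    rw [hπequiv]
    exact hZfree _ (hπrange ▸ Set.mem_range_self x) g hg
  obtain ⟨r, hr, hlow⟩ := exists_lowDimMap_of_mdim_lt hk hT hmdim
  obtain ⟨A, hAc, hAs, hA, hcov⟩ := exists_marker hT hπcont hπequiv hfree r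
  obtain ⟨h, hhc, hhi, hhb⟩ := exists_injective_code k l
  obtain ⟨f, hfc, hfa, hfi⟩ := exists_admissible_injective hT hπcont hπequiv hfree hAc hAs hr
    (fun x hx g hg hgr => hA x hx g hg fun i => (hgr i).le)
    (fun x => (hcov x).imp fun g hg => hg.2) hlow (h := fun x => h (π x)) (hhc.comp hπcont)
    (fun x => (hhb _).1) (fun x => (hhb _).2) (fun x y hxy => hhi hxy) (⟨0, hD⟩ : Fin D)
  refine ⟨fun x n j => ⟨f (T n x) j, hfa.nonneg _ _, hfa.le_one _ _⟩, ?_, ?_⟩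
  · refine (Continuous.isClosedEmbedding ?_ ?_).isEmbedding
    · refine continuous_pi fun n => continuous_pi fun j => Continuous.subtype_mk ?_ _
      exact (continuous_apply j).comp (hfc.comp (hT.cont n))
    · intro x y hxy
      refine hfi x y fun n => funext fun j => ?_
      exact congrArg Subtype.val (congrFun (congrFun hxy n) j)
  · intro g x
    funext n j
    apply Subtype.ext
    change f (T n (T g x)) j = f (T (n + g) x) j
    rw [hT.map_add]
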